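/- arXiv:2007.09132 — 3 statements merged into one kernel-verified Lean document; each statement's English description precedes it below -/
import Mathlib

section
/- Let m : J → ℝ be differentiable on J with (^{ABC}D^α m) continuous on J. If there exists τ₀ ∈ (0,T] with m(τ₀) = 0 and m(τ) ≤ 0 for all τ ∈ [0,τ₀), then (^{ABC}D^α m)(τ₀) ≥ 0. -/
/-- One-parameter Mittag-Leffler function `E_α(z) = ∑ zⁿ / Γ(nα+1)`. -/
noncomputable def mlE (α z : ℝ) : ℝ := ∑' n : ℕ, z ^ n / Real.Gamma (n * α + 1)

/-- Atangana–Baleanu–Caputo fractional derivative of order `α` (base point 0),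
with normalization constant `B = B(α)`. -/
noncomputable def abcD (α B : ℝ) (m : ℝ → ℝ) (τ : ℝ) : ℝ :=
  B / (1 - α) * ∫ σ in (0:ℝ)..τ, mlE α (-(α / (1 - α)) * (τ - σ) ^ α) * deriv m σ

/-!
The kernel `σ ↦ E_α(-c (τ₀ - σ) ^ α)`, `c = α / (1 - α)`, is positive and increasing, so integrating
it by parts against the derivative of `m - m τ₀ ≤ 0` leaves only nonnegative terms. Since
`E_α' = E_{α,α} / α`, this needs `E_{α,1}` and `E_{α,α}` to be positive on `(-∞, 0]`.

For `z ≤ 0` the function `w t = E_{α,α}(z t ^ α)` solves `w t = 1 / Γ(α) - ∫₀ᵗ K(t, s) w(s) ds`,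
where `K(t, s) = -z / Γ(α) * (s (t - s) / t) ^ (α - 1)` is nonnegative and decreasing in `t`. If
`t₁` were the first zero of `w`, then `w r ≤ ∫ᵣ^t₁ K(t₁, s) w(s) ds` for all `r < t₁`, which is
impossible for an `r` close to `t₁` with `w ≤ w r` on `[r, t₁]`. Finally, for `β > α`, `E_{α,β}(z)`
is a positive multiple of a fractional integral of `s ^ (α - 1) * w s`.
-/

open MeasureTheory Filter Topology Set
open ProbabilityTheory (beta beta_pos)

theorem integral_rpow_mul_sub_rpow {p q t : ℝ} (hp : 0 < p) (hq : 0 < q) (ht : 0 < t) :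
    ∫ s in (0 : ℝ)..t, s ^ (p - 1) * (t - s) ^ (q - 1) = t ^ (p + q - 1) * beta p q := by
  have hcast : ∫ s in (0 : ℝ)..t, (s : ℂ) ^ ((p : ℂ) - 1) * ((t : ℂ) - s) ^ ((q : ℂ) - 1)
      = ∫ s in (0 : ℝ)..t, ((s ^ (p - 1) * (t - s) ^ (q - 1) : ℝ) : ℂ) := by
    refine intervalIntegral.integral_congr fun s hs ↦ ?_
    rw [uIcc_of_le ht.le] at hs
    push_cast [Complex.ofReal_cpow hs.1, Complex.ofReal_cpow (sub_nonneg.2 hs.2)]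
    rfl
  have hbeta := Complex.betaIntegral_scaled p q ht
  rw [Complex.betaIntegral_eq_Gamma_mul_div _ _ (by simpa) (by simpa), hcast,
    intervalIntegral.integral_ofReal] at hbeta
  apply Complex.ofReal_injective
  rw [hbeta, beta]
  push_cast [Complex.ofReal_cpow ht.le, ← Complex.Gamma_ofReal]
  rfl

theorem intervalIntegrable_rpow_mul_sub_rpow {p q t : ℝ} (hp : 0 < p) (hq : 0 < q)
    (ht : 0 < t) :
    IntervalIntegrable (fun s ↦ s ^ (p - 1) * (t - s) ^ (q - 1)) volume 0 t := by
  -- A non-integrable function has integral `0`, but the value here is positive.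
  refine intervalIntegral.intervalIntegrable_of_integral_ne_zero ?_
  rw [integral_rpow_mul_sub_rpow hp hq ht]
  exact (mul_pos (Real.rpow_pos_of_pos ht _) (beta_pos hp hq)).ne'

theorem gamma_add_one_mul_rpow_le {x a : ℝ} (hx : 0 < x) (ha : 0 < a) :
    Real.Gamma (x + 1) * x ^ a ≤ Real.Gamma (x + 1 + a) := by
  have hΓ : 0 < Real.Gamma x := Real.Gamma_pos_of_pos hx
  have hΓ₁ : 0 < Real.Gamma (x + 1) := Real.Gamma_pos_of_pos (by positivity)
  have hslope := Real.convexOn_log_Gamma.slope_mono_adjacent (x := x) (y := x + 1)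
    (z := x + 1 + a) hx (mem_Ioi.2 (by positivity)) (by linarith) (by linarith)
  have hstep : Real.log (Real.Gamma (x + 1)) - Real.log (Real.Gamma x) = Real.log x := by
    rw [Real.Gamma_add_one hx.ne', Real.log_mul hx.ne' hΓ.ne', add_sub_cancel_right]
  simp only [Function.comp_apply, hstep, add_sub_cancel_left, div_one] at hslope
  rw [le_div_iff₀ ha] at hslope
  rw [← Real.log_le_log_iff (by positivity) (Real.Gamma_pos_of_pos (by positivity)),
    Real.log_mul hΓ₁.ne' (by positivity), Real.log_rpow hx]
  linarith

theorem tendsto_gamma_div_gamma_add {a : ℝ} (ha : 0 < a) :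
    Tendsto (fun x ↦ Real.Gamma x / Real.Gamma (x + a)) atTop (𝓝 0) := by
  have hbound : Tendsto (fun x : ℝ ↦ (x - 1) ^ (-a)) atTop (𝓝 0) :=
    (tendsto_rpow_neg_atTop ha).comp (tendsto_atTop_add_const_right _ (-1) tendsto_id)
  refine squeeze_zero' ?_ ?_ hbound <;> filter_upwards [eventually_gt_atTop 1] with x hx
  · exact div_nonneg (Real.Gamma_pos_of_pos (by linarith)).le
      (Real.Gamma_pos_of_pos (by linarith)).le
  · have hx₀ : 0 < x - 1 := sub_pos.2 hx
    have hle := gamma_add_one_mul_rpow_le hx₀ ha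
    rw [sub_add_cancel] at hle
    rw [Real.rpow_neg hx₀.le, ← one_div,
      div_le_div_iff₀ (Real.Gamma_pos_of_pos (by linarith)) (by positivity), one_mul]
    exact hle

theorem hasDerivAt_tsum_mul_pow {𝕜 : Type*} [RCLike 𝕜] {a : ℕ → 𝕜}
    (ha : ∀ z, Summable fun n ↦ a n * z ^ n) (z : 𝕜) :
    HasDerivAt (fun w ↦ ∑' n, a n * w ^ n) (∑' n : ℕ, (n + 1) * a (n + 1) * z ^ n) z := by
  set R : ℝ := ‖z‖ + 1
  have hR : 1 ≤ R := le_add_of_nonneg_left (norm_nonneg z)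
  have hbound : ∀ (n : ℕ), ∀ w ∈ Metric.ball (0 : 𝕜) R,
      ‖a n * (n * w ^ (n - 1))‖ ≤ ‖a n * ((2 * R : ℝ) : 𝕜) ^ n‖ := by
    intro n w hw
    have hwR : ‖w‖ ≤ R := (mem_ball_zero_iff.1 hw).le
    have hn : (n : ℝ) ≤ 2 ^ n := by exact_mod_cast n.lt_two_pow_self.le
    rw [norm_mul, norm_mul, norm_mul, norm_pow, norm_pow, RCLike.norm_natCast, RCLike.norm_ofReal,
      abs_of_pos (by positivity), mul_pow]
    gcongr
    calc ‖w‖ ^ (n - 1) ≤ R ^ (n - 1) := by gcongr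
      _ ≤ R ^ n := pow_le_pow_right₀ hR (n.sub_le 1)
  have hz : z ∈ Metric.ball (0 : 𝕜) R := by simp [R]
  have hderiv := hasDerivAt_tsum_of_isPreconnected (ha ((2 * R : ℝ) : 𝕜)).norm Metric.isOpen_ball
    (convex_ball (0 : 𝕜) R).isPreconnected
    (fun n w _ ↦ (hasDerivAt_pow n w).const_mul (a n)) hbound hz (ha z) hz
  have hsum : Summable fun n : ℕ ↦ a n * (n * z ^ (n - 1)) :=
    .of_norm_bounded (ha ((2 * R : ℝ) : 𝕜)).norm fun n ↦ hbound n z hz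
  refine hderiv.congr_deriv ?_
  rw [hsum.tsum_eq_zero_add]
  simp only [Nat.cast_zero, zero_mul, mul_zero, zero_add, Nat.cast_add, Nat.cast_one,
    add_tsub_cancel_right]
  exact tsum_congr fun n ↦ by ring

/-- Two-parameter Mittag-Leffler function `E_{α,β}(z) = ∑ zⁿ / Γ(nα+β)`: `E_{α,1}` is `mlE α`, and
`E_{α,α}` is, up to a factor `α`, its derivative. -/
noncomputable def mittagLeffler (α β z : ℝ) : ℝ := ∑' n : ℕ, z ^ n / Real.Gamma (n * α + β)

section MittagLeffler

variable {α β γ : ℝ}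

theorem mlE_eq_mittagLeffler (α : ℝ) : mlE α = mittagLeffler α 1 := rfl

theorem gamma_natCast_mul_add_pos (hα : 0 < α) (hβ : 0 < β) (n : ℕ) :
    0 < Real.Gamma (n * α + β) :=
  Real.Gamma_pos_of_pos (by positivity)

theorem summable_mittagLeffler (hα : 0 < α) (hβ : 0 < β) (z : ℝ) :
    Summable fun n : ℕ ↦ z ^ n / Real.Gamma (n * α + β) := by
  have harg : Tendsto (fun n : ℕ ↦ (n : ℝ) * α + β) atTop atTop :=
    tendsto_atTop_add_const_right _ β (tendsto_natCast_atTop_atTop.atTop_mul_const hα)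
  have hratio : Tendsto (fun n : ℕ ↦ |z| * (Real.Gamma (n * α + β) / Real.Gamma (n * α + β + α)))
      atTop (𝓝 0) := by
    simpa using ((tendsto_gamma_div_gamma_add hα).comp harg).const_mul |z|
  refine summable_of_ratio_norm_eventually_le (r := 1 / 2) (by norm_num) ?_
  filter_upwards [hratio.eventually_le_const (by norm_num : (0 : ℝ) < 1 / 2)] with n hn
  have hΓ := gamma_natCast_mul_add_pos hα hβ n
  have hΓ' := gamma_natCast_mul_add_pos hα hβ (n + 1)
  have hsucc : ((n + 1 : ℕ) : ℝ) * α + β = n * α + β + α := by push_cast; ring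
  rw [norm_div, norm_div, norm_pow, norm_pow, Real.norm_of_nonneg hΓ.le,
    Real.norm_of_nonneg hΓ'.le, Real.norm_eq_abs]
  rw [hsucc] at hΓ' ⊢
  calc |z| ^ (n + 1) / Real.Gamma (n * α + β + α)
      = |z| * (Real.Gamma (n * α + β) / Real.Gamma (n * α + β + α))
          * (|z| ^ n / Real.Gamma (n * α + β)) := by rw [pow_succ']; field_simp
    _ ≤ 1 / 2 * (|z| ^ n / Real.Gamma (n * α + β)) := by gcongr

theorem mittagLeffler_zero (hα : 0 < α) (hβ : 0 < β) :
    mittagLeffler α β 0 = 1 / Real.Gamma β := by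
  rw [mittagLeffler, (summable_mittagLeffler hα hβ 0).tsum_eq_zero_add]
  simp

theorem mittagLeffler_eq_one_div_gamma_add (hα : 0 < α) (hβ : 0 < β) (z : ℝ) :
    mittagLeffler α β z = 1 / Real.Gamma β + z * mittagLeffler α (α + β) z := by
  rw [mittagLeffler, (summable_mittagLeffler hα hβ z).tsum_eq_zero_add, mittagLeffler,
    ← tsum_mul_left]
  congr 1
  · simp
  · refine tsum_congr fun n ↦ ?_
    rw [show ((n + 1 : ℕ) : ℝ) * α + β = n * α + (α + β) by push_cast; ring]
    ring

theorem hasDerivAt_mittagLeffler (hα : 0 < α) (hβ : 0 < β) (z : ℝ) :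
    HasDerivAt (mittagLeffler α β)
      (∑' n : ℕ, (n + 1) * (Real.Gamma ((n + 1 : ℕ) * α + β))⁻¹ * z ^ n) z := by
  have hcoeff : mittagLeffler α β = fun w ↦ ∑' n : ℕ, (Real.Gamma (n * α + β))⁻¹ * w ^ n := by
    funext w
    simp only [mittagLeffler, div_eq_inv_mul]
  rw [hcoeff]
  exact hasDerivAt_tsum_mul_pow
    (fun w ↦ by simpa only [div_eq_inv_mul] using summable_mittagLeffler hα hβ w) z

theorem continuous_mittagLeffler (hα : 0 < α) (hβ : 0 < β) : Continuous (mittagLeffler α β) :=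
  continuous_iff_continuousAt.2 fun z ↦ (hasDerivAt_mittagLeffler hα hβ z).continuousAt

theorem continuous_mittagLeffler_mul_rpow (hα : 0 < α) (hβ : 0 < β) (c : ℝ) :
    Continuous fun t : ℝ ↦ mittagLeffler α β (c * t ^ α) :=
  (continuous_mittagLeffler hα hβ).comp ((Real.continuous_rpow_const hα.le).const_mul c)

theorem hasDerivAt_mlE (hα : 0 < α) (z : ℝ) :
    HasDerivAt (mlE α) (mittagLeffler α α z / α) z := by
  rw [mlE_eq_mittagLeffler]
  refine (hasDerivAt_mittagLeffler hα one_pos z).congr_deriv ?_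
  rw [mittagLeffler, ← tsum_div_const]
  refine tsum_congr fun n ↦ ?_
  have := gamma_natCast_mul_add_pos hα hα n
  rw [Real.Gamma_add_one (by positivity),
    show ((n + 1 : ℕ) : ℝ) * α = n * α + α by push_cast; ring]
  field_simp

theorem rpow_mul_sub_rpow_mul_mittagLeffler_term {s : ℝ} (hs : 0 < s) (t c : ℝ) (n : ℕ) :
    s ^ (β - 1) * (t - s) ^ (γ - 1) * ((c * s ^ α) ^ n / Real.Gamma (n * α + β))
      = c ^ n / Real.Gamma (n * α + β) * (s ^ (n * α + β - 1) * (t - s) ^ (γ - 1)) := by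
  have hpow : s ^ (n * α + β - 1) = (s ^ α) ^ n * s ^ (β - 1) := by
    rw [← Real.rpow_natCast, ← Real.rpow_mul hs.le, ← Real.rpow_add hs]
    congr 1
    ring
  rw [hpow, mul_pow]
  ring

theorem integrableOn_mittagLeffler_term (hα : 0 < α) (hβ : 0 < β) (hγ : 0 < γ) {t : ℝ}
    (ht : 0 < t) (c : ℝ) (n : ℕ) :
    IntegrableOn (fun s ↦ s ^ (β - 1) * (t - s) ^ (γ - 1) *
      ((c * s ^ α) ^ n / Real.Gamma (n * α + β))) (Ioc 0 t) := by
  have hp : 0 < n * α + β := by positivity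
  refine IntegrableOn.congr_fun
    ((intervalIntegrable_rpow_mul_sub_rpow hp hγ ht).1.const_mul (c ^ n / Real.Gamma (n * α + β)))
    (fun s hs ↦ ?_) measurableSet_Ioc
  exact (rpow_mul_sub_rpow_mul_mittagLeffler_term hs.1 t c n).symm

theorem setIntegral_mittagLeffler_term (hα : 0 < α) (hβ : 0 < β) (hγ : 0 < γ) {t : ℝ}
    (ht : 0 < t) (c : ℝ) (n : ℕ) :
    ∫ s in Ioc 0 t, s ^ (β - 1) * (t - s) ^ (γ - 1) * ((c * s ^ α) ^ n / Real.Gamma (n * α + β))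
      = Real.Gamma γ * t ^ (β + γ - 1) * ((c * t ^ α) ^ n / Real.Gamma (n * α + (β + γ))) := by
  have hp : 0 < n * α + β := by positivity
  have hpow : t ^ (n * α + β + γ - 1) = (t ^ α) ^ n * t ^ (β + γ - 1) := by
    rw [← Real.rpow_natCast, ← Real.rpow_mul ht.le, ← Real.rpow_add ht]
    congr 1
    ring
  rw [setIntegral_congr_fun measurableSet_Ioc
      (fun s hs ↦ rpow_mul_sub_rpow_mul_mittagLeffler_term hs.1 t c n), integral_const_mul,
    ← intervalIntegral.integral_of_le ht.le, integral_rpow_mul_sub_rpow hp hγ ht, beta, hpow,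
    mul_pow, ← add_assoc]
  have := gamma_natCast_mul_add_pos hα hβ n
  field_simp

theorem integral_rpow_mul_sub_rpow_mul_mittagLeffler (hα : 0 < α) (hβ : 0 < β) (hγ : 0 < γ)
    {t : ℝ} (ht : 0 < t) (c : ℝ) :
    ∫ s in (0 : ℝ)..t, s ^ (β - 1) * (t - s) ^ (γ - 1) * mittagLeffler α β (c * s ^ α)
      = Real.Gamma γ * t ^ (β + γ - 1) * mittagLeffler α (β + γ) (c * t ^ α) := by
  have hnorm : ∀ n : ℕ,
      ∫ s in Ioc 0 t, ‖s ^ (β - 1) * (t - s) ^ (γ - 1) *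
          ((c * s ^ α) ^ n / Real.Gamma (n * α + β))‖
        = Real.Gamma γ * t ^ (β + γ - 1) *
          ((|c| * t ^ α) ^ n / Real.Gamma (n * α + (β + γ))) := by
    intro n
    rw [← setIntegral_mittagLeffler_term hα hβ hγ ht |c| n]
    refine setIntegral_congr_fun measurableSet_Ioc fun s hs ↦ ?_
    have hs₀ : 0 ≤ s := hs.1.le
    have hts : 0 ≤ t - s := sub_nonneg.2 hs.2
    simp only [norm_mul, norm_div, norm_pow, Real.norm_eq_abs,
      abs_of_pos (gamma_natCast_mul_add_pos hα hβ n), abs_of_nonneg (Real.rpow_nonneg hs₀ _),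
      abs_of_nonneg (Real.rpow_nonneg hts _)]
  have hseries := hasSum_integral_of_summable_integral_norm
    (integrableOn_mittagLeffler_term hα hβ hγ ht c)
    (by simpa only [hnorm] using (summable_mittagLeffler hα (add_pos hβ hγ) _).mul_left _)
  simp only [setIntegral_mittagLeffler_term hα hβ hγ ht, tsum_mul_left] at hseries
  rw [intervalIntegral.integral_of_le ht.le]
  exact hseries.unique ((summable_mittagLeffler hα (add_pos hβ hγ) _).hasSum.mul_left _)

end MittagLeffler

theorem exists_first_le {X Y : Type*} [LinearOrder X] [TopologicalSpace X] [OrderClosedTopology X]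
    [CompactIccSpace X] [LinearOrder Y] [TopologicalSpace Y] [ClosedIicTopology Y] {f : X → Y}
    {a b : X} {y : Y} (hab : a ≤ b) (hf : ContinuousOn f (Icc a b)) (ha : y < f a) (hb : f b ≤ y) :
    ∃ c ∈ Ioc a b, f c ≤ y ∧ ∀ x ∈ Ico a c, y < f x := by
  have hclosed : IsClosed (Icc a b ∩ f ⁻¹' Iic y) :=
    hf.preimage_isClosed_of_isClosed isClosed_Icc isClosed_Iic
  obtain ⟨c, ⟨hc, hfc⟩, hleast⟩ :=
    (isCompact_Icc.of_isClosed_subset hclosed inter_subset_left).exists_isLeast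
      ⟨b, ⟨hab, le_rfl⟩, hb⟩
  have hac : a ≠ c := by
    rintro rfl
    exact ha.not_ge hfc
  refine ⟨c, ⟨hc.1.lt_of_ne hac, hc.2⟩, hfc, fun x hx ↦ ?_⟩
  by_contra! hfx
  exact hx.2.not_ge (hleast ⟨⟨hx.1, hx.2.le.trans hc.2⟩, hfx⟩)

theorem exists_forall_integral_lt {f : ℝ → ℝ} {a b ε : ℝ} (hab : a < b) (hε : 0 < ε)
    (hf : IntervalIntegrable f volume a b) :
    ∃ x ∈ Ico a b, ∀ t ∈ Icc x b, ∫ s in t..b, f s < ε := by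
  have hcont : ContinuousOn (fun t ↦ ∫ s in t..b, f s) (uIcc a b) :=
    intervalIntegral.continuousOn_primitive_interval_left
      ((intervalIntegrable_iff' (by simp)).1 hf)
  rw [uIcc_of_le hab.le] at hcont
  have hsmall : ∀ᶠ t in 𝓝[≤] b, ∫ s in t..b, f s < ε := by
    rw [← nhdsWithin_Icc_eq_nhdsLE hab]
    exact (hcont b (right_mem_Icc.2 hab.le)).eventually_lt_const
      (by simpa only [intervalIntegral.integral_same] using hε)
  obtain ⟨l, hlb, hl⟩ := mem_nhdsLE_iff_exists_Icc_subset.1 hsmall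
  exact ⟨max a l, ⟨le_max_left a l, max_lt hab hlb⟩,
    fun t ht ↦ hl ⟨(le_max_right a l).trans ht.1, ht.2⟩⟩

section Volterra

variable {w : ℝ → ℝ} {K : ℝ → ℝ → ℝ} {c : ℝ}

theorem sub_le_integral_of_volterra {t t₁ : ℝ} (ht : 0 ≤ t) (htt₁ : t < t₁)
    (hw : ContinuousOn w (Icc 0 t₁)) (hwpos : ∀ s ∈ Ioo 0 t, 0 ≤ w s)
    (hKint : ∀ r ∈ Ioc 0 t₁, IntervalIntegrable (K r) volume 0 r)
    (hKanti : ∀ s, 0 < s → AntitoneOn (K · s) (Ioi s))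
    (hvolterra : ∀ r ∈ Icc 0 t₁, w r = c - ∫ s in (0 : ℝ)..r, K r s * w s) :
    w t - w t₁ ≤ ∫ s in t..t₁, K t₁ s * w s := by
  have ht₁ : 0 < t₁ := ht.trans_lt htt₁
  have hint : ∀ r ∈ Icc 0 t₁, IntervalIntegrable (fun s ↦ K r s * w s) volume 0 r := by
    intro r hr
    rcases hr.1.eq_or_lt with rfl | hr₀
    · exact .refl
    · exact (hKint r ⟨hr₀, hr.2⟩).mul_continuousOn
        (hw.mono (by rw [uIcc_of_le hr.1]; exact Icc_subset_Icc_right hr.2))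
  have ht_mem : t ∈ Icc 0 t₁ := ⟨ht, htt₁.le⟩
  have ht₁_mem : t₁ ∈ Icc 0 t₁ := ⟨ht₁.le, le_rfl⟩
  have hleft : IntervalIntegrable (fun s ↦ K t₁ s * w s) volume 0 t :=
    (hint t₁ ht₁_mem).mono_set (uIcc_subset_uIcc_left (by rwa [uIcc_of_le ht₁.le]))
  have hright : IntervalIntegrable (fun s ↦ K t₁ s * w s) volume t t₁ :=
    (hint t₁ ht₁_mem).mono_set (uIcc_subset_uIcc_right (by rwa [uIcc_of_le ht₁.le]))
  have hdecay : ∫ s in (0 : ℝ)..t, K t₁ s * w s ≤ ∫ s in (0 : ℝ)..t, K t s * w s :=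
    intervalIntegral.integral_mono_on_of_le_Ioo ht hleft (hint t ht_mem) fun s hs ↦
      mul_le_mul_of_nonneg_right
        (hKanti s hs.1 hs.2 (hs.2.trans htt₁) htt₁.le) (hwpos s hs)
  have hsplit := intervalIntegral.integral_add_adjacent_intervals hleft hright
  rw [hvolterra t ht_mem, hvolterra t₁ ht₁_mem]
  linarith

theorem pos_of_volterra (hc : 0 < c) (hw : ContinuousOn w (Ici 0))
    (hKint : ∀ t, 0 < t → IntervalIntegrable (K t) volume 0 t)
    (hKnonneg : ∀ t, ∀ s ∈ Ioo 0 t, 0 ≤ K t s)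
    (hKanti : ∀ s, 0 < s → AntitoneOn (K · s) (Ioi s))
    (hvolterra : ∀ t, 0 ≤ t → w t = c - ∫ s in (0 : ℝ)..t, K t s * w s) {t : ℝ} (ht : 0 ≤ t) :
    0 < w t := by
  have hw₀ : 0 < w 0 := by simpa [hvolterra 0 le_rfl] using hc
  by_contra! hwt
  obtain ⟨t₁, ⟨ht₁, -⟩, hwt₁, hpos⟩ :=
    exists_first_le ht (hw.mono Icc_subset_Ici_self) hw₀ hwt
  obtain ⟨a, ⟨ha, hat₁⟩, hsmall⟩ := exists_forall_integral_lt ht₁ one_pos (hKint t₁ ht₁)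
  -- Maximality of `w r` on `[a, t₁]` lets `∫ᵣ^t₁ K(t₁, s) w(s) ds` be bounded by `w r` itself.
  obtain ⟨r, hr, hmax⟩ := isCompact_Icc.exists_isMaxOn (nonempty_Icc.2 hat₁.le)
    (hw.mono (Icc_subset_Ici_self.trans (Ici_subset_Ici.2 ha)))
  have hwr : 0 < w r := (hpos a ⟨ha, hat₁⟩).trans_le (hmax (left_mem_Icc.2 hat₁.le))
  have hrt₁ : r < t₁ := hr.2.lt_of_ne (by rintro rfl; exact hwr.not_ge hwt₁)
  have hr₀ : 0 ≤ r := ha.trans hr.1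
  have hKright : IntervalIntegrable (K t₁) volume r t₁ := (hKint t₁ ht₁).mono_set
    (uIcc_subset_uIcc_right (by rw [uIcc_of_le ht₁.le]; exact ⟨hr₀, hr.2⟩))
  have hKw : IntervalIntegrable (fun s ↦ K t₁ s * w s) volume r t₁ :=
    hKright.mul_continuousOn (hw.mono (by
      rw [uIcc_of_le hr.2]; exact Icc_subset_Ici_self.trans (Ici_subset_Ici.2 hr₀)))
  have : w r < w r := calc
    w r ≤ w r - w t₁ := by linarith
    _ ≤ ∫ s in r..t₁, K t₁ s * w s :=
      sub_le_integral_of_volterra hr₀ hrt₁ (hw.mono Icc_subset_Ici_self)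
        (fun s hs ↦ (hpos s ⟨hs.1.le, hs.2.trans hrt₁⟩).le) (fun r hr ↦ hKint r hr.1) hKanti
        (fun r hr ↦ hvolterra r hr.1)
    _ ≤ ∫ s in r..t₁, K t₁ s * w r :=
      intervalIntegral.integral_mono_on_of_le_Ioo hr.2 hKw (hKright.mul_const _) fun s hs ↦
        mul_le_mul_of_nonneg_left (hmax ⟨hr.1.trans hs.1.le, hs.2.le⟩)
          (hKnonneg t₁ s ⟨hr₀.trans_lt hs.1, hs.2⟩)
    _ = (∫ s in r..t₁, K t₁ s) * w r := intervalIntegral.integral_mul_const _ _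
    _ < w r := mul_lt_of_lt_one_left hwr (hsmall r hr)
  exact this.false

end Volterra

section Positivity

variable {α β : ℝ}

theorem mul_sub_div_le_mul_sub_div {s t t' : ℝ} (ht : 0 < t) (htt' : t ≤ t') :
    s * (t - s) / t ≤ s * (t' - s) / t' := by
  rw [div_le_div_iff₀ ht (ht.trans_le htt')]
  nlinarith [mul_le_mul_of_nonneg_left htt' (mul_self_nonneg s)]

theorem antitoneOn_mul_sub_div_rpow {r s : ℝ} (hr : r ≤ 0) (hs : 0 < s) :
    AntitoneOn (fun t ↦ (s * (t - s) / t) ^ r) (Ioi s) := by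
  intro t ht t' _ htt'
  have ht₀ : 0 < t := hs.trans ht
  exact Real.rpow_le_rpow_of_nonpos (div_pos (mul_pos hs (sub_pos.2 ht)) ht₀)
    (mul_sub_div_le_mul_sub_div ht₀ htt') hr

theorem mul_sub_div_rpow {s t : ℝ} (hs : s ∈ Icc 0 t) (r : ℝ) :
    (s * (t - s) / t) ^ r = s ^ r * (t - s) ^ r / t ^ r := by
  have hts : 0 ≤ t - s := sub_nonneg.2 hs.2
  rw [Real.div_rpow (mul_nonneg hs.1 hts) (hs.1.trans hs.2), Real.mul_rpow hs.1 hts]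

theorem intervalIntegrable_mul_sub_div_rpow {t : ℝ} (hα : 0 < α) (ht : 0 < t) :
    IntervalIntegrable (fun s ↦ (s * (t - s) / t) ^ (α - 1)) volume 0 t := by
  refine ((intervalIntegrable_rpow_mul_sub_rpow hα hα ht).div_const (t ^ (α - 1))).congr
    fun s hs ↦ ?_
  rw [uIoc_of_le ht.le] at hs
  exact (mul_sub_div_rpow (Ioc_subset_Icc_self hs) _).symm

theorem mittagLeffler_self_eq_sub_integral (hα : 0 < α) (c : ℝ) {t : ℝ} (ht : 0 ≤ t) :
    mittagLeffler α α (c * t ^ α) = 1 / Real.Gamma α -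
      ∫ s in (0 : ℝ)..t, -c / Real.Gamma α * (s * (t - s) / t) ^ (α - 1) *
        mittagLeffler α α (c * s ^ α) := by
  rcases ht.eq_or_lt with rfl | ht₀
  · simp [Real.zero_rpow hα.ne', mittagLeffler_zero hα hα]
  have : 0 < Real.Gamma α := Real.Gamma_pos_of_pos hα
  have hpow : t ^ (α + α - 1) = t ^ α * t ^ (α - 1) := by
    rw [← Real.rpow_add ht₀]
    congr 1
    ring
  have hintegrand : ∀ s ∈ uIcc 0 t,
      -c / Real.Gamma α * (s * (t - s) / t) ^ (α - 1) * mittagLeffler α α (c * s ^ α)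
        = -c / (Real.Gamma α * t ^ (α - 1)) *
          (s ^ (α - 1) * (t - s) ^ (α - 1) * mittagLeffler α α (c * s ^ α)) := by
    intro s hs
    rw [uIcc_of_le ht] at hs
    rw [mul_sub_div_rpow hs]
    field_simp
  rw [intervalIntegral.integral_congr hintegrand, intervalIntegral.integral_const_mul,
    integral_rpow_mul_sub_rpow_mul_mittagLeffler hα hα hα ht₀, hpow,
    mittagLeffler_eq_one_div_gamma_add hα hα]
  have : 0 < t ^ (α - 1) := Real.rpow_pos_of_pos ht₀ _
  field_simp
  ring

theorem mittagLeffler_self_pos (hα : 0 < α) (hα₁ : α ≤ 1) {z : ℝ} (hz : z ≤ 0) :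
    0 < mittagLeffler α α z := by
  have hΓ : 0 < Real.Gamma α := Real.Gamma_pos_of_pos hα
  have hcoeff : 0 ≤ -z / Real.Gamma α := div_nonneg (neg_nonneg.2 hz) hΓ.le
  have hpos := pos_of_volterra (one_div_pos.2 hΓ)
    (continuous_mittagLeffler_mul_rpow hα hα z).continuousOn
    (K := fun t s ↦ -z / Real.Gamma α * (s * (t - s) / t) ^ (α - 1))
    (fun t ht ↦ (intervalIntegrable_mul_sub_div_rpow hα ht).const_mul _)
    (fun t s hs ↦ mul_nonneg hcoeff (Real.rpow_nonneg
      (div_nonneg (mul_nonneg hs.1.le (sub_pos.2 hs.2).le) (hs.1.trans hs.2).le) _))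
    (fun s hs t ht t' ht' htt' ↦ mul_le_mul_of_nonneg_left
      (antitoneOn_mul_sub_div_rpow (sub_nonpos.2 hα₁) hs ht ht' htt') hcoeff)
    (fun t ht ↦ mittagLeffler_self_eq_sub_integral hα z ht) zero_le_one
  simpa only [Real.one_rpow, mul_one] using hpos

theorem mittagLeffler_pos (hα : 0 < α) (hα₁ : α ≤ 1) (hαβ : α ≤ β) {z : ℝ} (hz : z ≤ 0) :
    0 < mittagLeffler α β z := by
  rcases hαβ.eq_or_lt with rfl | hlt
  · exact mittagLeffler_self_pos hα hα₁ hz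
  have hγ : 0 < β - α := sub_pos.2 hlt
  have hcont := (continuous_mittagLeffler_mul_rpow hα hα z).continuousOn (s := uIcc 0 1)
  have hint := integral_rpow_mul_sub_rpow_mul_mittagLeffler hα hα hγ one_pos z
  simp only [Real.one_rpow, mul_one, add_sub_cancel] at hint
  have hintpos : 0 < Real.Gamma (β - α) * mittagLeffler α β z := by
    rw [← hint]
    refine intervalIntegral.intervalIntegral_pos_of_pos_on
      ((intervalIntegrable_rpow_mul_sub_rpow hα hγ one_pos).mul_continuousOn hcont)
      (fun s hs ↦ ?_) one_pos
    have hs₁ : 0 < 1 - s := sub_pos.2 hs.2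
    have harg : z * s ^ α ≤ 0 :=
      mul_nonpos_of_nonpos_of_nonneg hz (Real.rpow_nonneg hs.1.le α)
    exact mul_pos (mul_pos (Real.rpow_pos_of_pos hs.1 _) (Real.rpow_pos_of_pos hs₁ _))
      (mittagLeffler_self_pos hα hα₁ harg)
  exact pos_of_mul_pos_right hintpos (Real.Gamma_pos_of_pos hγ).le

theorem mlE_pos (hα : 0 < α) (hα₁ : α ≤ 1) {z : ℝ} (hz : z ≤ 0) : 0 < mlE α z :=
  mittagLeffler_pos hα hα₁ hα₁ hz

end Positivity

theorem intervalIntegrable_of_continuousOn_mul {𝕜 : Type*} [NormedField 𝕜] {f g : ℝ → 𝕜}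
    {a b : ℝ} (hg : ContinuousOn g (uIcc a b)) (hg₀ : ∀ x ∈ uIcc a b, g x ≠ 0)
    (hgf : IntervalIntegrable (fun x ↦ g x * f x) volume a b) :
    IntervalIntegrable f volume a b :=
  (hgf.continuousOn_mul (hg.inv₀ hg₀)).congr fun x hx ↦
    inv_mul_cancel_left₀ (hg₀ x (uIoc_subset_uIcc hx)) (f x)

theorem integral_mul_deriv_nonneg_of_le_right {g g' m m' : ℝ → ℝ} {a b : ℝ} (hab : a ≤ b)
    (hg : ContinuousOn g (Icc a b)) (hgpos : ∀ x ∈ Icc a b, 0 < g x)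
    (hg' : ∀ x ∈ Ioo a b, HasDerivAt g (g' x) x) (hg'nonneg : ∀ x ∈ Ioo a b, 0 ≤ g' x)
    (hm : ContinuousOn m (Icc a b)) (hm' : ∀ x ∈ Ioo a b, HasDerivAt m (m' x) x)
    (hmax : ∀ x ∈ Ico a b, m x ≤ m b)
    (hint : IntervalIntegrable (fun x ↦ g x * m' x) volume a b) :
    0 ≤ ∫ x in a..b, g x * m' x := by
  rw [← uIcc_of_le hab] at hg hm hgpos
  have hIoo : Ioo (min a b) (max a b) = Ioo a b := by rw [min_eq_left hab, max_eq_right hab]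
  have hm'int : IntervalIntegrable m' volume a b :=
    intervalIntegrable_of_continuousOn_mul hg (fun x hx ↦ (hgpos x hx).ne') hint
  have hg'int : IntervalIntegrable g' volume a b :=
    intervalIntegral.intervalIntegrable_deriv_of_nonneg hg (hIoo ▸ hg') (hIoo ▸ hg'nonneg)
  have hsub : ContinuousOn (fun x ↦ m x - m b) (uIcc a b) := hm.sub continuousOn_const
  have hparts := intervalIntegral.integral_mul_deriv_eq_deriv_mul_of_hasDerivAt hg hsub
    (hIoo ▸ hg') (fun x hx ↦ (hm' x (hIoo ▸ hx)).sub_const (m b)) hg'int hm'int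
  have hle : ∀ x ∈ Icc a b, m x - m b ≤ 0 := fun x hx ↦ sub_nonpos.2 <|
    hx.2.eq_or_lt.elim (fun h ↦ (congrArg m h).le) fun h ↦ hmax x ⟨hx.1, h⟩
  have hboundary : g a * (m a - m b) ≤ 0 :=
    mul_nonpos_of_nonneg_of_nonpos (hgpos a left_mem_uIcc).le (hle a ⟨le_rfl, hab⟩)
  have hinterior : ∫ x in a..b, g' x * (m x - m b) ≤ ∫ _ in a..b, (0 : ℝ) :=
    intervalIntegral.integral_mono_on_of_le_Ioo hab (hg'int.mul_continuousOn hsub)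
      intervalIntegrable_const fun x hx ↦
        mul_nonpos_of_nonneg_of_nonpos (hg'nonneg x hx) (hle x (Ioo_subset_Icc_self hx))
  rw [intervalIntegral.integral_zero] at hinterior
  rw [hparts, sub_self, mul_zero]
  linarith

theorem hasDerivAt_mlE_mul_sub_rpow {α : ℝ} (hα : 0 < α) (c : ℝ) {τ σ : ℝ} (hσ : σ < τ) :
    HasDerivAt (fun σ ↦ mlE α (c * (τ - σ) ^ α))
      (-c * (τ - σ) ^ (α - 1) * mittagLeffler α α (c * (τ - σ) ^ α)) σ := by
  have harg : HasDerivAt (fun σ ↦ c * (τ - σ) ^ α) (c * (-1 * α * (τ - σ) ^ (α - 1))) σ :=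
    (((hasDerivAt_id σ).const_sub τ).rpow_const (.inl (sub_pos.2 hσ).ne')).const_mul c
  refine ((hasDerivAt_mlE hα _).comp σ harg).congr_deriv ?_
  field_simp

theorem abc_deriv_nonneg_at_zero_from_below_general {α B τ₀ : ℝ} (hα : 0 < α) (hα₁ : α < 1)
    (hB : 0 ≤ B) (hτ₀ : 0 ≤ τ₀) {m : ℝ → ℝ} (hm : ContinuousOn m (Icc 0 τ₀))
    (hm' : ∀ τ ∈ Ioo 0 τ₀, DifferentiableAt ℝ m τ) (hmax : ∀ τ ∈ Ico 0 τ₀, m τ ≤ m τ₀) :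
    0 ≤ abcD α B m τ₀ := by
  have hcoeff : 0 ≤ α / (1 - α) := div_nonneg hα.le (sub_pos.2 hα₁).le
  have harg : ∀ σ ≤ τ₀, -(α / (1 - α)) * (τ₀ - σ) ^ α ≤ 0 := fun σ hσ ↦
    mul_nonpos_of_nonpos_of_nonneg (neg_nonpos.2 hcoeff) (Real.rpow_nonneg (sub_nonneg.2 hσ) α)
  have hcont : Continuous fun σ ↦ mlE α (-(α / (1 - α)) * (τ₀ - σ) ^ α) :=
    (continuous_mittagLeffler_mul_rpow hα one_pos _).comp (continuous_sub_left τ₀)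
  refine mul_nonneg (div_nonneg hB (sub_pos.2 hα₁).le) ?_
  by_cases hint : IntervalIntegrable
    (fun σ ↦ mlE α (-(α / (1 - α)) * (τ₀ - σ) ^ α) * deriv m σ) volume 0 τ₀
  · refine integral_mul_deriv_nonneg_of_le_right hτ₀ hcont.continuousOn
      (fun σ hσ ↦ mlE_pos hα hα₁.le (harg σ hσ.2))
      (fun σ hσ ↦ hasDerivAt_mlE_mul_sub_rpow hα _ hσ.2) (fun σ hσ ↦ ?_) hm
      (fun σ hσ ↦ (hm' σ hσ).hasDerivAt) hmax hint
    have hkernel : 0 ≤ (τ₀ - σ) ^ (α - 1) := Real.rpow_nonneg (sub_pos.2 hσ.2).le _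
    rw [neg_neg]
    exact mul_nonneg (mul_nonneg hcoeff hkernel)
      (mittagLeffler_pos hα hα₁.le le_rfl (harg σ hσ.2.le)).le
  -- Junk value: the integral of a non-integrable function is `0`.
  · exact (intervalIntegral.integral_undef hint).ge

theorem abc_deriv_nonneg_at_zero_from_below
    (T α B : ℝ) (hT : 0 < T) (hα : 0 < α) (hα1 : α < 1) (hB : 0 < B)
    (m : ℝ → ℝ)
    (hmdiff : ∀ τ ∈ Set.Icc (0:ℝ) T, DifferentiableAt ℝ m τ)
    (hcont : ContinuousOn (abcD α B m) (Set.Icc (0:ℝ) T))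
    (τ₀ : ℝ) (hτ₀ : τ₀ ∈ Set.Ioc (0:ℝ) T)
    (hm0 : m τ₀ = 0)
    (hneg : ∀ τ ∈ Set.Ico (0:ℝ) τ₀, m τ ≤ 0) :
    0 ≤ abcD α B m τ₀ := by
  have hdiff : ∀ τ ∈ Icc 0 τ₀, DifferentiableAt ℝ m τ := fun τ hτ ↦
    hmdiff τ ⟨hτ.1, hτ.2.trans hτ₀.2⟩
  exact abc_deriv_nonneg_at_zero_from_below_general hα hα1 hB.le hτ₀.1.le
    (fun τ hτ ↦ (hdiff τ hτ).continuousAt.continuousWithinAt)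
    (fun τ hτ ↦ hdiff τ (Ioo_subset_Icc_self hτ)) (fun τ hτ ↦ (hneg τ hτ).trans_eq hm0.symm)
end

section
/- Let f : J → ℝ be differentiable on J with (^{ABC}D^α f) continuous on J. If f attains its maximum over J at a point τ₀ ∈ J, then (^{ABC}D^α f)(τ₀) ≥ 0. -/
/-!
Layer by layer, a nonnegative nondecreasing kernel `K` on `[0, τ₀]` is a superposition of
indicators of final segments of `[0, τ₀]`, and the integral of `f'` over such a segment is
`f τ₀ - f c ≥ 0`. Hence `∫ K f' ≥ 0`, and it remains to see that the Mittag-Leffler function `E_α`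
is nonnegative and nondecreasing for `0 < α ≤ 1`.

Expand `∑ₖ zᵏ (1 - X)^(-αk-1) = (1 - X)^(α-1) / ((1 - X)^α - z)` in powers of `X`: the
coefficients are nonnegative and increase with `z ∈ (-1, 1)`, because `(1 - X)^α` has nonpositive
coefficients beyond the constant one. By Euler's limit formula for `Γ`, the coefficient of `Xⁿ`
taken at `z / n^α` tends to `E_α(z)`.
-/

open Filter MeasureTheory Topology

section Multichoose

open Finset Ring
open scoped Nat

theorem factorial_mul_multichoose {R : Type*} [CommRing R] [BinomialRing R] (r : R) (n : ℕ) :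
    (n ! : R) * multichoose r n = ∏ i ∈ range n, (r + i) := by
  rw [← nsmul_eq_mul, factorial_nsmul_multichoose_eq_ascPochhammer,
    Polynomial.ascPochhammer_smeval_eq_eval]
  induction n with
  | zero => simp
  | succ n ih => rw [ascPochhammer_succ_eval, ih, prod_range_succ]

theorem multichoose_add {R : Type*} [CommRing R] [BinomialRing R] (r s : R) (n : ℕ) :
    multichoose (r + s) n = ∑ p ∈ antidiagonal n, multichoose r p.1 * multichoose s p.2 := by
  have h := add_choose_eq n (Commute.all (-r) (-s))
  rw [← neg_add, choose_neg'] at h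
  refine smul_left_cancel (Int.negOnePow n) (h.trans ?_)
  rw [smul_sum]
  refine sum_congr rfl fun p hp => ?_
  rw [choose_neg', choose_neg', ← mem_antidiagonal.1 hp, Nat.cast_add, Int.negOnePow_add,
    smul_mul_smul_comm]

theorem add_one_mul_multichoose_succ {𝕜 : Type*} [Field 𝕜] [CharZero 𝕜] [BinomialRing 𝕜] (s : 𝕜)
    (n : ℕ) : (n + 1) * multichoose s (n + 1) = (s + n) * multichoose s n := by
  have h := factorial_mul_multichoose s (n + 1)
  rw [prod_range_succ, ← factorial_mul_multichoose, Nat.factorial_succ] at h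
  push_cast at h
  refine mul_left_cancel₀ (Nat.cast_ne_zero.2 n.factorial_ne_zero : (n ! : 𝕜) ≠ 0) ?_
  linear_combination h

theorem multichoose_eq_prod_div {𝕜 : Type*} [Field 𝕜] [CharZero 𝕜] [BinomialRing 𝕜] (s : 𝕜)
    (n : ℕ) : multichoose s n = ∏ i ∈ range n, (s + i) / (i + 1) := by
  have hfact : ∏ i ∈ range n, ((i : 𝕜) + 1) = n ! := mod_cast prod_range_add_one_eq_factorial n
  rw [prod_div_distrib, ← factorial_mul_multichoose, hfact,
    mul_div_cancel_left₀ _ (Nat.cast_ne_zero.2 n.factorial_ne_zero)]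

section Order

variable {𝕜 : Type*} [Field 𝕜] [LinearOrder 𝕜] [IsStrictOrderedRing 𝕜] [BinomialRing 𝕜]

theorem multichoose_nonneg {s : 𝕜} (hs : 0 ≤ s) (n : ℕ) : 0 ≤ multichoose s n := by
  rw [multichoose_eq_prod_div]
  exact prod_nonneg fun i _ => by positivity

theorem multichoose_neg_succ_nonpos {α : 𝕜} (hα : 0 ≤ α) (hα1 : α ≤ 1) (n : ℕ) :
    multichoose (-α) (n + 1) ≤ 0 := by
  rw [multichoose_eq_prod_div, prod_range_succ']
  refine mul_nonpos_of_nonneg_of_nonpos (prod_nonneg fun i _ => ?_) (by simpa using hα)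
  push_cast
  exact div_nonneg (by linarith) (by linarith)

theorem multichoose_add_one_le_pow {a : 𝕜} (ha : 0 ≤ a) (n : ℕ) :
    multichoose (a + 1) n ≤ (a + 1) ^ n := by
  rw [multichoose_eq_prod_div]
  refine (prod_le_prod (fun i _ => by positivity) fun i _ => ?_).trans_eq
    (by rw [prod_const, card_range])
  rw [div_le_iff₀ (by positivity)]
  nlinarith [mul_nonneg ha i.cast_nonneg]

end Order

theorem one_add_mul_one_sub_inv_le_rpow {a x : ℝ} (ha : 0 ≤ a) (hx : 0 < x) :
    1 + a * (1 - x⁻¹) ≤ x ^ a := by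
  calc 1 + a * (1 - x⁻¹) ≤ 1 + a * Real.log x := by
        gcongr
        exact Real.one_sub_inv_le_log_of_pos hx
    _ ≤ x ^ a := by
        rw [Real.rpow_def_of_pos hx, mul_comm a, add_comm]
        exact Real.add_one_le_exp _

theorem multichoose_add_one_le_pow_mul_rpow {a : ℝ} (ha : 0 ≤ a) {m n : ℕ} (hm : 0 < m)
    (hmn : m ≤ n) : multichoose (a + 1) n ≤ (a + 1) ^ m * ((n : ℝ) / m) ^ a := by
  induction n, hmn using Nat.le_induction with
  | base =>
    rw [div_self (by positivity), Real.one_rpow, mul_one]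
    exact multichoose_add_one_le_pow ha m
  | succ n hmn ih =>
    have hn : 0 < n := hm.trans_le hmn
    have hrec : multichoose (a + 1) (n + 1) =
        multichoose (a + 1) n * (1 + a * (1 - (((n : ℝ) + 1) / n)⁻¹)) := by
      have h := add_one_mul_multichoose_succ (a + 1) n
      field_simp
      linear_combination h
    calc multichoose (a + 1) (n + 1)
        ≤ multichoose (a + 1) n * (((n : ℝ) + 1) / n) ^ a := by
          rw [hrec]
          gcongr
          · exact multichoose_nonneg (by positivity) n
          · exact one_add_mul_one_sub_inv_le_rpow ha (by positivity)
      _ ≤ (a + 1) ^ m * ((n : ℝ) / m) ^ a * (((n : ℝ) + 1) / n) ^ a := by gcongr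
      _ = (a + 1) ^ m * (((n + 1 : ℕ) : ℝ) / m) ^ a := by
          rw [mul_assoc, ← Real.mul_rpow (by positivity) (by positivity), div_mul_div_comm,
            mul_comm (n : ℝ), mul_div_mul_right _ _ (by positivity), Nat.cast_succ]

theorem tendsto_multichoose_div_rpow {s : ℝ} (hs : Real.Gamma s ≠ 0) :
    Tendsto (fun n : ℕ => multichoose s n / (n : ℝ) ^ (s - 1)) atTop (𝓝 (Real.Gamma s)⁻¹) := by
  have h := ((Real.GammaSeq_tendsto_Gamma s).inv₀ hs).mul (tendsto_natCast_div_add_atTop s)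
  rw [mul_one] at h
  refine h.congr' ?_
  filter_upwards [eventually_gt_atTop 0,
    tendsto_natCast_atTop_atTop.eventually_gt_atTop (-s)] with n hn hns
  have hns' : s + n ≠ 0 := by linarith
  rw [Real.GammaSeq, prod_range_succ, ← factorial_mul_multichoose,
    Real.rpow_sub_one (by positivity), add_comm (n : ℝ)]
  field_simp

end Multichoose

section DiscreteMittagLeffler

open Finset Ring

/-- A discrete Mittag-Leffler function: the coefficient of `Xⁿ` in `∑ₖ zᵏ (1 - X)^(-αk-1)`, which
approximates `E_α(n^α z)`. Since `multichoose s n` is the coefficient of `Xⁿ` in `(1 - X)^(-s)`, the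
series is summed coefficientwise; it converges for `|z| < 1` and `α ≥ 0`. -/
noncomputable def discreteMittagLeffler (α z : ℝ) (n : ℕ) : ℝ :=
  ∑' k : ℕ, z ^ k * multichoose (α * k + 1) n

theorem summable_mul_add_one_pow_mul_geometric (a : ℝ) (m : ℕ) {r : ℝ} (hr : |r| < 1) :
    Summable fun k : ℕ => (a * k + 1) ^ m * r ^ k := by
  simp_rw [add_pow, one_pow, mul_one, Finset.sum_mul]
  refine summable_sum fun j _ => ?_
  refine ((summable_pow_mul_geometric_of_norm_lt_one j hr).mul_left (a ^ j * m.choose j)).congr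
    fun k => ?_
  ring

theorem summable_discreteMittagLeffler {α z : ℝ} (hα : 0 ≤ α) (hz : |z| < 1) (n : ℕ) :
    Summable fun k : ℕ => z ^ k * multichoose (α * k + 1) n := by
  refine .of_norm_bounded
    (summable_mul_add_one_pow_mul_geometric α n (r := |z|) (by rwa [abs_abs])) fun k => ?_
  have hk : 0 ≤ α * k := by positivity
  rw [norm_mul, norm_pow, Real.norm_eq_abs, mul_comm,
    Real.norm_of_nonneg (multichoose_nonneg (by positivity) n)]
  gcongr
  exact multichoose_add_one_le_pow hk n

theorem sum_multichoose_mul_discreteMittagLeffler {α z : ℝ} (hα : 0 ≤ α) (hz : |z| < 1) (n : ℕ) :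
    ∑ p ∈ antidiagonal n, multichoose (-α) p.1 * discreteMittagLeffler α z p.2 =
      multichoose (1 - α) n + z * discreteMittagLeffler α z n := by
  have hsum (m : ℕ) : HasSum (fun k : ℕ => z ^ k * multichoose (α * k + 1) m)
      (discreteMittagLeffler α z m) := (summable_discreteMittagLeffler hα hz m).hasSum
  have hterm (k : ℕ) : ∑ p ∈ antidiagonal n,
      multichoose (-α) p.1 * (z ^ k * multichoose (α * k + 1) p.2) =
        z ^ k * multichoose (α * k + 1 - α) n := by
    rw [show α * k + 1 - α = -α + (α * k + 1) by ring, multichoose_add, mul_sum]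
    exact sum_congr rfl fun p _ => by ring
  have hleft : HasSum (fun k : ℕ => z ^ k * multichoose (α * k + 1 - α) n)
      (∑ p ∈ antidiagonal n, multichoose (-α) p.1 * discreteMittagLeffler α z p.2) := by
    simp_rw [← hterm]
    exact hasSum_sum fun p _ => (hsum p.2).mul_left (multichoose (-α) p.1)
  have hright : HasSum (fun k : ℕ => z ^ k * multichoose (α * k + 1 - α) n)
      (multichoose (1 - α) n + z * discreteMittagLeffler α z n) := by
    have hshift : HasSum
        (fun k : ℕ => z ^ (k + 1) * multichoose (α * (k + 1 : ℕ) + 1 - α) n)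
        (z * discreteMittagLeffler α z n) := by
      refine ((hsum n).mul_left z).congr_fun fun k => ?_
      rw [show α * (k + 1 : ℕ) + 1 - α = α * k + 1 by push_cast; ring]
      ring
    simpa using HasSum.zero_add (f := fun k : ℕ => z ^ k * multichoose (α * k + 1 - α) n) hshift
  exact hleft.unique hright

theorem nonneg_of_forall_le_sum_antidiagonal {R : Type*} [Ring R] [LinearOrder R]
    [IsStrictOrderedRing R] {w v : ℕ → R} {z : R} (hw : ∀ n, w (n + 1) ≤ 0)
    (hz : z < w 0) (h : ∀ n, z * v n ≤ ∑ p ∈ antidiagonal n, w p.1 * v p.2) (n : ℕ) :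
    0 ≤ v n := by
  induction n using Nat.strong_induction_on with
  | _ n ih =>
    suffices 0 ≤ (w 0 - z) * v n from nonneg_of_mul_nonneg_right this (sub_pos.2 hz)
    have hn := h n
    cases n with
    | zero => simpa [sub_mul] using hn
    | succ n =>
      rw [Nat.sum_antidiagonal_succ] at hn
      have htail : ∑ p ∈ antidiagonal n, w (p.1 + 1) * v p.2 ≤ 0 := sum_nonpos fun p hp =>
        mul_nonpos_of_nonpos_of_nonneg (hw _) (ih _ (Nat.antidiagonal.snd_lt hp))
      rw [sub_mul, sub_nonneg]
      exact hn.trans (add_le_of_nonpos_right htail)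

variable {α : ℝ} (hα : 0 ≤ α) (hα1 : α ≤ 1)
include hα hα1

theorem discreteMittagLeffler_nonneg {z : ℝ} (hz : |z| < 1) (n : ℕ) :
    0 ≤ discreteMittagLeffler α z n := by
  refine nonneg_of_forall_le_sum_antidiagonal (multichoose_neg_succ_nonpos hα hα1)
    (z := z) (by simpa using (abs_lt.1 hz).2) (fun n => ?_) n
  rw [sum_multichoose_mul_discreteMittagLeffler hα hz]
  exact le_add_of_nonneg_left (multichoose_nonneg (sub_nonneg.2 hα1) n)

theorem discreteMittagLeffler_mono {y z : ℝ} (hy : |y| < 1) (hz : |z| < 1) (hyz : y ≤ z) (n : ℕ) :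
    discreteMittagLeffler α y n ≤ discreteMittagLeffler α z n := by
  rw [← sub_nonneg]
  refine nonneg_of_forall_le_sum_antidiagonal
    (v := fun n => discreteMittagLeffler α z n - discreteMittagLeffler α y n)
    (multichoose_neg_succ_nonpos hα hα1) (z := y) (by simpa using (abs_lt.1 hy).2) (fun n => ?_) n
  simp_rw [mul_sub, sum_sub_distrib]
  rw [sum_multichoose_mul_discreteMittagLeffler hα hy,
    sum_multichoose_mul_discreteMittagLeffler hα hz]
  have := mul_le_mul_of_nonneg_right hyz (discreteMittagLeffler_nonneg hα hα1 hz n)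
  linarith

end DiscreteMittagLeffler

section MittagLeffler

open Ring Set

variable {α : ℝ}

theorem tendsto_natCast_rpow_atTop (hα : 0 < α) : Tendsto (fun n : ℕ => (n : ℝ) ^ α) atTop atTop :=
  (tendsto_rpow_atTop hα).comp tendsto_natCast_atTop_atTop

theorem norm_discreteMittagLeffler_term_le (hα : 0 ≤ α) (z : ℝ) {m n : ℕ} (hm : 0 < m)
    (hmn : m ≤ n) (k : ℕ) : ‖(z / (n : ℝ) ^ α) ^ k * multichoose (α * k + 1) n‖ ≤
      (α * k + 1) ^ m * (|z| / (m : ℝ) ^ α) ^ k := by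
  have hn : 0 < n := hm.trans_le hmn
  have hk : 0 ≤ α * k := by positivity
  rw [norm_mul, norm_pow, norm_div, Real.norm_eq_abs, Real.norm_of_nonneg (by positivity),
    Real.norm_of_nonneg (multichoose_nonneg (by positivity) n)]
  calc (|z| / (n : ℝ) ^ α) ^ k * multichoose (α * k + 1) n
      ≤ (|z| / (n : ℝ) ^ α) ^ k * ((α * k + 1) ^ m * ((n : ℝ) / m) ^ (α * k)) := by
        gcongr
        exact multichoose_add_one_le_pow_mul_rpow hk hm hmn
    _ = (α * k + 1) ^ m * (|z| / (m : ℝ) ^ α) ^ k := by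
        rw [Real.rpow_mul_natCast (by positivity), Real.div_rpow (by positivity) (by positivity),
          mul_left_comm, ← mul_pow, div_mul_div_cancel₀ (by positivity)]

theorem tendsto_discreteMittagLeffler_term (hα : 0 ≤ α) (z : ℝ) (k : ℕ) :
    Tendsto (fun n : ℕ => (z / (n : ℝ) ^ α) ^ k * multichoose (α * k + 1) n) atTop
      (𝓝 (z ^ k / Real.Gamma (k * α + 1))) := by
  have hΓ : Real.Gamma (α * k + 1) ≠ 0 := (Real.Gamma_pos_of_pos (by positivity)).ne'
  have h := (tendsto_multichoose_div_rpow hΓ).const_mul (z ^ k)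
  rw [mul_comm α, ← div_eq_mul_inv] at h
  refine h.congr fun n => ?_
  rw [add_sub_cancel_right, mul_comm (k : ℝ), Real.rpow_mul_natCast n.cast_nonneg, div_pow]
  ring

theorem tendsto_discreteMittagLeffler (hα : 0 < α) (z : ℝ) :
    Tendsto (fun n : ℕ => discreteMittagLeffler α (z / (n : ℝ) ^ α) n) atTop (𝓝 (mlE α z)) := by
  obtain ⟨m, hmz, hm⟩ := (((tendsto_natCast_rpow_atTop hα).eventually_gt_atTop |z|).and
    (eventually_gt_atTop 0)).exists
  have hratio : |(|z| / (m : ℝ) ^ α)| < 1 := by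
    rwa [abs_of_nonneg (by positivity), div_lt_one (by positivity)]
  refine tendsto_tsum_of_dominated_convergence
    (summable_mul_add_one_pow_mul_geometric α m hratio)
    (tendsto_discreteMittagLeffler_term hα.le z) ?_
  filter_upwards [eventually_ge_atTop m] with n hmn
  exact norm_discreteMittagLeffler_term_le hα.le z hm hmn

theorem eventually_abs_div_rpow_lt_one (hα : 0 < α) (z : ℝ) :
    ∀ᶠ n : ℕ in atTop, |z / (n : ℝ) ^ α| < 1 := by
  filter_upwards [(tendsto_natCast_rpow_atTop hα).eventually_gt_atTop |z|] with n hn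
  rwa [abs_div, abs_of_nonneg (by positivity : 0 ≤ (n : ℝ) ^ α),
    div_lt_one ((abs_nonneg z).trans_lt hn)]

theorem mlE_nonneg (hα : 0 < α) (hα1 : α ≤ 1) (z : ℝ) : 0 ≤ mlE α z := by
  refine ge_of_tendsto (tendsto_discreteMittagLeffler hα z) ?_
  filter_upwards [eventually_abs_div_rpow_lt_one hα z] with n hn
  exact discreteMittagLeffler_nonneg hα.le hα1 hn n

theorem monotone_mlE (hα : 0 < α) (hα1 : α ≤ 1) : Monotone (mlE α) := by
  intro y z hyz
  refine le_of_tendsto_of_tendsto (tendsto_discreteMittagLeffler hα y)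
    (tendsto_discreteMittagLeffler hα z) ?_
  filter_upwards [eventually_abs_div_rpow_lt_one hα y, eventually_abs_div_rpow_lt_one hα z]
    with n hy hz
  exact discreteMittagLeffler_mono hα.le hα1 hy hz (by gcongr) n

theorem monotoneOn_mlE_kernel (hα : 0 < α) (hα1 : α ≤ 1) {c : ℝ} (hc : 0 ≤ c) (τ : ℝ) :
    MonotoneOn (fun σ => mlE α (-c * (τ - σ) ^ α)) (Iic τ) := by
  intro σ _ ρ hρ hσρ
  refine monotone_mlE hα hα1 (mul_le_mul_of_nonpos_left ?_ (neg_nonpos.2 hc))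
  have hτρ : 0 ≤ τ - ρ := sub_nonneg.2 hρ
  gcongr

end MittagLeffler

section LayerCake

open Set

variable {X : Type*} [MeasurableSpace X] {μ : Measure X} {K g : X → ℝ}

theorem integrableOn_superlevel_of_integrable_mul (hK : AEMeasurable K μ)
    (hg : AEStronglyMeasurable g μ) (hKg : Integrable (fun x => K x * g x) μ) {t : ℝ}
    (ht : 0 < t) : IntegrableOn g {x | t < K x} μ := by
  refine (hKg.norm.const_mul t⁻¹).integrableOn.mono' hg.restrict ?_
  filter_upwards [ae_restrict_mem₀ (nullMeasurableSet_lt aemeasurable_const hK)] with x hx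
  rw [inv_mul_eq_div, le_div_iff₀ ht, mul_comm, norm_mul]
  gcongr
  exact hx.le.trans (Real.le_norm_self _)

theorem integral_nonneg_iff_lintegral_ofReal_neg_le (hg : Integrable g μ) :
    0 ≤ ∫ x, g x ∂μ ↔ ∫⁻ x, ENNReal.ofReal (-g x) ∂μ ≤ ∫⁻ x, ENNReal.ofReal (g x) ∂μ := by
  rw [integral_eq_lintegral_pos_part_sub_lintegral_neg_part hg, sub_nonneg,
    ← ENNReal.toReal_le_toReal hg.fun_neg.lintegral_lt_top.ne hg.lintegral_lt_top.ne]

theorem lintegral_ofReal_mul_eq_lintegral_superlevel (hK : AEMeasurable K μ) (hK0 : 0 ≤ᵐ[μ] K)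
    (hg : AEMeasurable g μ) : ∫⁻ x, ENNReal.ofReal (K x * g x) ∂μ =
      ∫⁻ t in Ioi (0 : ℝ), ∫⁻ x in {x | t < K x}, ENNReal.ofReal (g x) ∂μ := by
  set ν := μ.withDensity fun x => ENNReal.ofReal (g x)
  have hνμ : ν ≪ μ := withDensity_absolutelyContinuous _ _
  calc ∫⁻ x, ENNReal.ofReal (K x * g x) ∂μ
      = ∫⁻ x, ENNReal.ofReal (K x) ∂ν := by
        rw [lintegral_withDensity_eq_lintegral_mul₀ hg.ennreal_ofReal hK.ennreal_ofReal]
        refine lintegral_congr_ae (hK0.mono fun x hx => ?_)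
        simp only [Pi.mul_apply, ENNReal.ofReal_mul hx, mul_comm]
    _ = ∫⁻ t in Ioi (0 : ℝ), ν {x | t < K x} :=
        lintegral_eq_lintegral_meas_lt ν (hνμ.ae_le hK0) (hK.mono_ac hνμ)
    _ = ∫⁻ t in Ioi (0 : ℝ), ∫⁻ x in {x | t < K x}, ENNReal.ofReal (g x) ∂μ := by
        congr with t
        exact withDensity_apply₀ _ (nullMeasurableSet_lt aemeasurable_const hK)

theorem integral_mul_nonneg_of_setIntegral_superlevel_nonneg (hK : AEMeasurable K μ)
    (hK0 : 0 ≤ᵐ[μ] K) (hg : AEStronglyMeasurable g μ) (hKg : Integrable (fun x => K x * g x) μ)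
    (h : ∀ t > 0, 0 ≤ ∫ x in {x | t < K x}, g x ∂μ) : 0 ≤ ∫ x, K x * g x ∂μ := by
  rw [integral_nonneg_iff_lintegral_ofReal_neg_le hKg]
  simp_rw [← mul_neg]
  rw [lintegral_ofReal_mul_eq_lintegral_superlevel hK hK0 hg.aemeasurable,
    lintegral_ofReal_mul_eq_lintegral_superlevel hK hK0 hg.aemeasurable.fun_neg]
  refine setLIntegral_mono' measurableSet_Ioi fun t ht => ?_
  exact (integral_nonneg_iff_lintegral_ofReal_neg_le
    (integrableOn_superlevel_of_integrable_mul hK hg hKg ht)).1 (h t ht)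

end LayerCake

section WeightedDerivative

open Set

variable {a b : ℝ}

theorem exists_Ioc_subset_and_ae_eq_of_upward_closed (hab : a ≤ b) {s : Set ℝ} (hs : s ⊆ Icc a b)
    (hup : ∀ x ∈ s, ∀ y ∈ Icc a b, x ≤ y → y ∈ s) :
    ∃ c ∈ Icc a b, Ioc c b ⊆ s ∧ s =ᵐ[volume] Ioc c b := by
  have hbound : a ∈ lowerBounds (insert b s) := by
    rintro x (rfl | hx)
    exacts [hab, (hs hx).1]
  set c := sInf (insert b s)
  have hac : a ≤ c := le_csInf (insert_nonempty b s) hbound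
  have hcb : c ≤ b := csInf_le ⟨a, hbound⟩ (mem_insert b s)
  have hIoc : Ioc c b ⊆ s := by
    intro y hy
    obtain ⟨x, rfl | hx, hxy⟩ := exists_lt_of_csInf_lt (insert_nonempty b s) hy.1
    · exact absurd hy.2 hxy.not_ge
    · exact hup x hx y ⟨hac.trans hy.1.le, hy.2⟩ hxy.le
  have hIcc : s ⊆ Icc c b := fun x hx =>
    ⟨csInf_le ⟨a, hbound⟩ (mem_insert_of_mem b hx), (hs hx).2⟩
  exact ⟨c, ⟨hac, hcb⟩, hIoc,
    (hIcc.eventuallyLE.trans Ioc_ae_eq_Icc.symm.le).antisymm hIoc.eventuallyLE⟩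

variable {f : ℝ → ℝ}

theorem setIntegral_deriv_nonneg_of_upward_closed (hab : a ≤ b) (hf : ContinuousOn f (Icc a b))
    (hf' : ∀ x ∈ Ioo a b, DifferentiableAt ℝ f x) (hmax : ∀ x ∈ Icc a b, f x ≤ f b) {s : Set ℝ}
    (hs : s ⊆ Icc a b) (hup : ∀ x ∈ s, ∀ y ∈ Icc a b, x ≤ y → y ∈ s)
    (hint : IntegrableOn (deriv f) s) : 0 ≤ ∫ x in s, deriv f x := by
  obtain ⟨c, hc, hIoc, hae⟩ := exists_Ioc_subset_and_ae_eq_of_upward_closed hab hs hup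
  have hftc : ∫ x in c..b, deriv f x = f b - f c :=
    intervalIntegral.integral_eq_sub_of_hasDerivAt_of_le hc.2
      (hf.mono (Icc_subset_Icc_left hc.1))
      (fun x hx => (hf' x (Ioo_subset_Ioo_left hc.1 hx)).hasDerivAt)
      ((intervalIntegrable_iff_integrableOn_Ioc_of_le hc.2).2 (hint.mono_set hIoc))
  rw [setIntegral_congr_set hae, ← intervalIntegral.integral_of_le hc.2, hftc]
  exact sub_nonneg.2 (hmax c hc)

theorem intervalIntegral_mul_deriv_nonneg {K : ℝ → ℝ} (hab : a ≤ b)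
    (hK : MonotoneOn K (Icc a b)) (hK0 : ∀ x ∈ Icc a b, 0 ≤ K x) (hf : ContinuousOn f (Icc a b))
    (hf' : ∀ x ∈ Ioo a b, DifferentiableAt ℝ f x) (hmax : ∀ x ∈ Icc a b, f x ≤ f b)
    (hint : IntervalIntegrable (fun x => K x * deriv f x) volume a b) :
    0 ≤ ∫ x in a..b, K x * deriv f x := by
  rw [intervalIntegrable_iff_integrableOn_Icc_of_le hab] at hint
  rw [intervalIntegral.integral_of_le hab, ← integral_Icc_eq_integral_Ioc]
  have hKm : AEMeasurable K (volume.restrict (Icc a b)) :=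
    aemeasurable_restrict_of_monotoneOn measurableSet_Icc hK
  have hfm : AEStronglyMeasurable (deriv f) (volume.restrict (Icc a b)) :=
    (measurable_deriv f).aestronglyMeasurable
  refine integral_mul_nonneg_of_setIntegral_superlevel_nonneg hKm
    (ae_restrict_of_forall_mem measurableSet_Icc hK0) hfm hint fun t ht => ?_
  have hderiv := integrableOn_superlevel_of_integrable_mul hKm hfm hint ht
  rw [IntegrableOn, Measure.restrict_restrict' measurableSet_Icc] at hderiv
  rw [Measure.restrict_restrict' measurableSet_Icc]
  exact setIntegral_deriv_nonneg_of_upward_closed hab hf hf' hmax inter_subset_right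
    (fun x hx y hy hxy => ⟨hx.1.trans_le (hK hx.2 hy hxy), hy⟩) hderiv

end WeightedDerivative

open Set

theorem abc_deriv_nonneg_at_max_general {α B τ₀ : ℝ} (hα : 0 < α) (hα1 : α < 1) (hB : 0 ≤ B)
    (hτ₀ : 0 ≤ τ₀) {f : ℝ → ℝ} (hf : ContinuousOn f (Icc 0 τ₀))
    (hf' : ∀ τ ∈ Ioo 0 τ₀, DifferentiableAt ℝ f τ) (hmax : ∀ τ ∈ Icc 0 τ₀, f τ ≤ f τ₀) :
    0 ≤ abcD α B f τ₀ := by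
  have hα' : 0 ≤ 1 - α := sub_nonneg.2 hα1.le
  refine mul_nonneg (div_nonneg hB hα') ?_
  by_cases hint : IntervalIntegrable
    (fun σ => mlE α (-(α / (1 - α)) * (τ₀ - σ) ^ α) * deriv f σ) volume 0 τ₀
  · exact intervalIntegral_mul_deriv_nonneg hτ₀
      ((monotoneOn_mlE_kernel hα hα1.le (div_nonneg hα.le hα') τ₀).mono Icc_subset_Iic_self)
      (fun σ _ => mlE_nonneg hα hα1.le _) hf hf' hmax hint
  · -- Differentiability alone does not make the integrand integrable; `∫` then takes the value `0`.
    exact (intervalIntegral.integral_undef hint).ge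

theorem abc_deriv_nonneg_at_max
    (T α B : ℝ) (hT : 0 < T) (hα : 0 < α) (hα1 : α < 1) (hB : 0 < B)
    (f : ℝ → ℝ)
    (hfdiff : ∀ τ ∈ Set.Icc (0:ℝ) T, DifferentiableAt ℝ f τ)
    (hcont : ContinuousOn (abcD α B f) (Set.Icc (0:ℝ) T))
    (τ₀ : ℝ) (hτ₀ : τ₀ ∈ Set.Icc (0:ℝ) T)
    (hmax : ∀ τ ∈ Set.Icc (0:ℝ) T, f τ ≤ f τ₀) :
    0 ≤ abcD α B f τ₀ := by
  have hsub : Icc 0 τ₀ ⊆ Icc 0 T := Icc_subset_Icc_right hτ₀.2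
  exact abc_deriv_nonneg_at_max_general hα hα1 hB.le hτ₀.1
    (fun τ hτ => (hfdiff τ (hsub hτ)).continuousAt.continuousWithinAt)
    (fun τ hτ => hfdiff τ (hsub (Ioo_subset_Icc_self hτ))) fun τ hτ => hmax τ (hsub hτ)
end

section
/- Let ω₀ ∈ ℝ, b > 0, and let R₀ = { (τ, ω) : τ ∈ J, |ω − ω₀| ≤ b }. Let f : J × ℝ → ℝ be continuous with |f(τ, ω)| ≤ M for all (τ, ω) ∈ R₀, satisfying |f(τ₁, ω) − f(τ₂, η)| ≤ L₁|τ₁ − τ₂| + L₂|ω − η| for all τ₁, τ₂ ∈ J and ω, η ∈ ℝ, with L₁ > 0 and 0 < L₂ < B(α)/(1−α), and with f(0, ω₀) = 0. If M(1−α) < b·B(α), then, setting β = min{ T, ( Γ(α)(b·B(α) − M(1−α)) / M )^{1/α} }, there exists a continuous function ω : [0,β] → ℝ with ω(0) = ω₀ and |ω(τ) − ω₀| ≤ b for all τ ∈ [0,β] that solves the ABC integral equation on [0,β]. -/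
/-!
The right-hand side of the ABC equation is an operator of the form
`x ↦ x₀ + c f(·, x) + k I^α f(·, x)`, where `I^α` is the Riemann–Liouville integral,
`c = (1 - α) / B` and `k = α / B`. The choice of `β` makes it preserve the continuous paths staying
in the closed ball of radius `b`. Since `I^α e^{l s} ≤ l^{-α} e^{l t}`, its Lipschitz constant for
the sup distance weighted by `e^{-l t}` is at most `(c + k l^{-α}) L`, which is below `1` for large
`l` because `c L < 1`; hence some iterate contracts the unweighted sup distance. At time `0` the
integral vanishes, so `x(0)` and `x₀` both solve `y = x₀ + c f(0, y)`, whose solution is unique,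
again because `c L < 1`.
-/

open Set Filter Topology MeasureTheory Metric

section RiemannLiouville

variable {E : Type*} [NormedAddCommGroup E] [NormedSpace ℝ E] {α t T : ℝ} {g h : ℝ → E}

/-- The Riemann–Liouville fractional integral `I^α g` of order `α` based at `0`, evaluated at `t`.
It is meant for `0 < α` and `0 ≤ t`. -/
noncomputable def riemannLiouville (α : ℝ) (g : ℝ → E) (t : ℝ) : E :=
  (Real.Gamma α)⁻¹ • ∫ s in (0 : ℝ)..t, (t - s) ^ (α - 1) • g s

@[simp]
lemma riemannLiouville_zero_right (α : ℝ) (g : ℝ → E) : riemannLiouville α g 0 = 0 := by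
  simp [riemannLiouville]

lemma riemannLiouville_const_mul (α C : ℝ) (φ : ℝ → ℝ) (t : ℝ) :
    riemannLiouville α (fun s => C * φ s) t = C * riemannLiouville α φ t := by
  simp only [riemannLiouville, smul_eq_mul, mul_left_comm _ C, intervalIntegral.integral_const_mul]

lemma intervalIntegrable_sub_rpow_smul (hα : 0 < α) (hg : ContinuousOn g (uIcc 0 t)) :
    IntervalIntegrable (fun s => (t - s) ^ (α - 1) • g s) volume 0 t := by
  have hpow : IntervalIntegrable (fun s : ℝ => s ^ (α - 1)) volume t 0 :=
    intervalIntegral.intervalIntegrable_rpow' (by linarith)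
  have hker := hpow.comp_sub_left t
  rw [sub_self, sub_zero] at hker
  exact hker.smul_continuousOn hg

lemma riemannLiouville_sub (hα : 0 < α) (hg : ContinuousOn g (uIcc 0 t))
    (hh : ContinuousOn h (uIcc 0 t)) :
    riemannLiouville α (fun s => g s - h s) t =
      riemannLiouville α g t - riemannLiouville α h t := by
  simp only [riemannLiouville, smul_sub]
  rw [intervalIntegral.integral_sub (intervalIntegrable_sub_rpow_smul hα hg)
    (intervalIntegrable_sub_rpow_smul hα hh), smul_sub]

lemma norm_riemannLiouville_le (hα : 0 < α) (ht : 0 ≤ t) {φ : ℝ → ℝ}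
    (hφ : ContinuousOn φ (Icc 0 t)) (hgφ : ∀ s ∈ Icc 0 t, ‖g s‖ ≤ φ s) :
    ‖riemannLiouville α g t‖ ≤ riemannLiouville α φ t := by
  have hΓ : 0 < (Real.Gamma α)⁻¹ := inv_pos.2 (Real.Gamma_pos_of_pos hα)
  rw [riemannLiouville, riemannLiouville, norm_smul, Real.norm_of_nonneg hΓ.le, smul_eq_mul]
  refine mul_le_mul_of_nonneg_left ?_ hΓ.le
  refine intervalIntegral.norm_integral_le_of_norm_le ht (.of_forall fun s hs => ?_)
    (intervalIntegrable_sub_rpow_smul hα (by rwa [uIcc_of_le ht]))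
  have hker : 0 ≤ (t - s) ^ (α - 1) := Real.rpow_nonneg (sub_nonneg.2 hs.2) _
  rw [norm_smul, Real.norm_of_nonneg hker]
  exact mul_le_mul_of_nonneg_left (hgφ s (Ioc_subset_Icc_self hs)) hker

lemma riemannLiouville_one (hα : 0 < α) (t : ℝ) :
    riemannLiouville α (fun _ => (1 : ℝ)) t = t ^ α / Real.Gamma (α + 1) := by
  simp only [riemannLiouville, smul_eq_mul, mul_one]
  rw [intervalIntegral.integral_comp_sub_left (fun s : ℝ => s ^ (α - 1)) t,
    integral_rpow (Or.inl (by linarith)), Real.Gamma_add_one hα.ne', sub_self, sub_zero,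
    sub_add_cancel, Real.zero_rpow hα.ne', sub_zero, inv_mul_eq_div, div_div]

lemma norm_riemannLiouville_le_of_norm_le_const (hα : 0 < α) (ht : 0 ≤ t) {M : ℝ}
    (hg : ∀ s ∈ Icc 0 t, ‖g s‖ ≤ M) :
    ‖riemannLiouville α g t‖ ≤ M * (t ^ α / Real.Gamma (α + 1)) := by
  rw [← riemannLiouville_one hα, ← riemannLiouville_const_mul]
  exact norm_riemannLiouville_le hα ht (by fun_prop) (by simpa only [mul_one] using hg)

lemma intervalIntegral_rpow_mul_exp_neg_mul_le (hα : 0 < α) (ht : 0 ≤ t) {l : ℝ} (hl : 0 < l) :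
    ∫ s in (0 : ℝ)..t, s ^ (α - 1) * Real.exp (-(l * s)) ≤ l ^ (-α) * Real.Gamma α := by
  have hint : IntegrableOn (fun s : ℝ => s ^ (α - 1) * Real.exp (-(l * s))) (Ioi 0) := by
    simpa only [Real.rpow_one, neg_mul] using
      integrableOn_rpow_mul_exp_neg_mul_rpow (p := 1) (s := α - 1) (by linarith) one_pos hl
  rw [Real.rpow_neg hl.le, ← Real.inv_rpow hl.le, ← one_div,
    ← Real.integral_rpow_mul_exp_neg_mul_Ioi hα hl, intervalIntegral.integral_of_le ht]
  refine setIntegral_mono_set hint ?_ Ioc_subset_Ioi_self.eventuallyLE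
  filter_upwards [ae_restrict_mem measurableSet_Ioi] with s hs
  exact mul_nonneg (Real.rpow_nonneg (mem_Ioi.1 hs).le _) (Real.exp_pos _).le

lemma riemannLiouville_exp_le (hα : 0 < α) (ht : 0 ≤ t) {l : ℝ} (hl : 0 < l) :
    riemannLiouville α (fun s => Real.exp (l * s)) t ≤ l ^ (-α) * Real.exp (l * t) := by
  have hfactor (s : ℝ) : (t - s) ^ (α - 1) * Real.exp (l * s) =
      Real.exp (l * t) * ((t - s) ^ (α - 1) * Real.exp (-(l * (t - s)))) := by
    rw [mul_left_comm, ← Real.exp_add]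
    ring_nf
  simp only [riemannLiouville, smul_eq_mul, hfactor, intervalIntegral.integral_const_mul]
  rw [intervalIntegral.integral_comp_sub_left
    (fun s : ℝ => s ^ (α - 1) * Real.exp (-(l * s))) t, sub_self, sub_zero]
  calc (Real.Gamma α)⁻¹ *
        (Real.exp (l * t) * ∫ s in (0 : ℝ)..t, s ^ (α - 1) * Real.exp (-(l * s)))
      ≤ (Real.Gamma α)⁻¹ * (Real.exp (l * t) * (l ^ (-α) * Real.Gamma α)) := by
        gcongr
        exact intervalIntegral_rpow_mul_exp_neg_mul_le hα ht hl
    _ = l ^ (-α) * Real.exp (l * t) := by field_simp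

lemma norm_riemannLiouville_le_of_norm_le_exp (hα : 0 < α) (ht : 0 ≤ t) {l K : ℝ} (hl : 0 < l)
    (hg : ∀ s ∈ Icc 0 t, ‖g s‖ ≤ K * Real.exp (l * s)) :
    ‖riemannLiouville α g t‖ ≤ K * (l ^ (-α) * Real.exp (l * t)) := by
  have hK : 0 ≤ K := by simpa using (norm_nonneg _).trans (hg 0 (left_mem_Icc.2 ht))
  calc ‖riemannLiouville α g t‖
      ≤ riemannLiouville α (fun s => K * Real.exp (l * s)) t :=
        norm_riemannLiouville_le hα ht (by fun_prop) hg
    _ = K * riemannLiouville α (fun s => Real.exp (l * s)) t := riemannLiouville_const_mul ..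
    _ ≤ K * (l ^ (-α) * Real.exp (l * t)) := by
        gcongr
        exact riemannLiouville_exp_le hα ht hl

lemma riemannLiouville_eq_rpow_smul_integral (hα : 0 < α) (ht : 0 ≤ t) (g : ℝ → E) :
    riemannLiouville α g t =
      (Real.Gamma α)⁻¹ • t ^ α • ∫ r in (0 : ℝ)..1, (1 - r) ^ (α - 1) • g (t * r) := by
  rw [riemannLiouville]
  congr 1
  rcases ht.eq_or_lt with rfl | ht_pos
  · simp [Real.zero_rpow hα.ne']
  have hscale := intervalIntegral.smul_integral_comp_mul_left (a := 0) (b := 1)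
    (f := fun s => (t - s) ^ (α - 1) • g s) t
  rw [mul_zero, mul_one] at hscale
  have hpow : t ^ α = t * t ^ (α - 1) := by rw [Real.rpow_sub_one ht_pos.ne']; field_simp
  rw [← hscale, hpow, mul_smul]
  simp only [← intervalIntegral.integral_smul]
  refine intervalIntegral.integral_congr fun r hr => ?_
  rw [uIcc_of_le zero_le_one] at hr
  rw [show t - t * r = t * (1 - r) by ring, Real.mul_rpow ht (sub_nonneg.2 hr.2), mul_smul]

lemma continuousOn_riemannLiouville (hα : 0 < α) (hg : ContinuousOn g (Icc 0 T)) :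
    ContinuousOn (riemannLiouville α g) (Icc 0 T) := by
  have hmaps {t r : ℝ} (ht : t ∈ Icc 0 T) (hr : r ∈ Icc (0 : ℝ) 1) : t * r ∈ Icc 0 T :=
    ⟨mul_nonneg ht.1 hr.1, (mul_le_of_le_one_right ht.1 hr.2).trans ht.2⟩
  obtain ⟨C, hC⟩ := isCompact_Icc.exists_bound_of_continuousOn hg
  have hscaled : ContinuousOn
      (fun t => ∫ r in (0 : ℝ)..1, (1 - r) ^ (α - 1) • g (t * r)) (Icc 0 T) := by
    intro t _
    refine intervalIntegral.continuousWithinAt_of_dominated_interval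
      (bound := fun r => (1 - r) ^ (α - 1) • C) ?_ ?_
      (intervalIntegrable_sub_rpow_smul hα continuousOn_const) (.of_forall fun r hr => ?_)
    · filter_upwards [self_mem_nhdsWithin] with t ht
      have hgt : ContinuousOn (fun r => g (t * r)) (uIcc 0 1) := by
        rw [uIcc_of_le zero_le_one]
        exact hg.comp (by fun_prop) fun r hr => hmaps ht hr
      exact (intervalIntegrable_sub_rpow_smul hα hgt).def'.aestronglyMeasurable
    · filter_upwards [self_mem_nhdsWithin] with t ht
      refine .of_forall fun r hr => ?_
      rw [uIoc_of_le zero_le_one] at hr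
      have hker : 0 ≤ (1 - r) ^ (α - 1) := Real.rpow_nonneg (sub_nonneg.2 hr.2) _
      rw [norm_smul, Real.norm_of_nonneg hker, smul_eq_mul]
      exact mul_le_mul_of_nonneg_left (hC _ (hmaps ht (Ioc_subset_Icc_self hr))) hker
    · rw [uIoc_of_le zero_le_one] at hr
      have hgr : ContinuousOn (fun t => g (t * r)) (Icc 0 T) :=
        hg.comp (by fun_prop) fun t ht => hmaps ht (Ioc_subset_Icc_self hr)
      exact (hgr t ‹_›).const_smul _
  refine ContinuousOn.congr ?_ fun t ht => riemannLiouville_eq_rpow_smul_integral hα ht.1 g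
  exact ((Real.continuous_rpow_const hα.le).continuousOn.smul hscaled).const_smul _

end RiemannLiouville

section FixedPoint

lemma exists_isFixedPt_of_weighted_contraction {I Y : Type*} [TopologicalSpace I] [CompactSpace I]
    [MetricSpace Y] [CompleteSpace Y] [Nonempty Y] {Φ : C(I, Y) → C(I, Y)} {w : I → ℝ} {q W : ℝ}
    (hq0 : 0 ≤ q) (hq1 : q < 1) (hw1 : ∀ t, 1 ≤ w t) (hwW : ∀ t, w t ≤ W)
    (hΦ : ∀ u v : C(I, Y), ∀ D : ℝ, (∀ t, dist (u t) (v t) ≤ D * w t) →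
      ∀ t, dist (Φ u t) (Φ v t) ≤ q * D * w t) :
    ∃ u, Function.IsFixedPt Φ u := by
  have hiter (n : ℕ) (u v : C(I, Y)) (t : I) :
      dist (Φ^[n] u t) (Φ^[n] v t) ≤ q ^ n * dist u v * w t := by
    induction n generalizing t with
    | zero =>
      rw [pow_zero, one_mul]
      exact (ContinuousMap.dist_apply_le_dist t).trans
        (le_mul_of_one_le_right dist_nonneg (hw1 t))
    | succ n ih =>
      rw [Function.iterate_succ_apply', Function.iterate_succ_apply', pow_succ', mul_assoc q]
      exact hΦ _ _ _ ih t
  obtain ⟨n, hn⟩ : ∃ n : ℕ, q ^ n * |W| < 1 := by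
    have hlim := (tendsto_pow_atTop_nhds_zero_of_lt_one hq0 hq1).mul_const |W|
    rw [zero_mul] at hlim
    exact (hlim.eventually_lt_const one_pos).exists
  have hcontr : ContractingWith (.mk (q ^ n * |W|) (by positivity)) Φ^[n] := by
    refine ⟨hn, LipschitzWith.of_dist_le_mul fun u v => ?_⟩
    refine (ContinuousMap.dist_le (by positivity)).2 fun t => ?_
    calc dist (Φ^[n] u t) (Φ^[n] v t)
        ≤ q ^ n * dist u v * w t := hiter n u v t
      _ ≤ q ^ n * dist u v * |W| := by
          gcongr
          exact (hwW t).trans (le_abs_self W)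
      _ = q ^ n * |W| * dist u v := mul_right_comm _ _ _
  have : Nonempty C(I, Y) := ‹Nonempty Y›.map (ContinuousMap.const I)
  exact ⟨_, hcontr.isFixedPt_fixedPoint_iterate⟩

lemma exists_continuousOn_eqOn_of_weighted_contraction {Y : Type*} [MetricSpace Y] {a b : ℝ}
    (hab : a ≤ b) {s : Set Y} (hs : IsComplete s) (hne : s.Nonempty) {V : (ℝ → Y) → ℝ → Y}
    (hVc : ∀ x, ContinuousOn x (Icc a b) → MapsTo x (Icc a b) s → ContinuousOn (V x) (Icc a b))
    (hVs : ∀ x, ContinuousOn x (Icc a b) → MapsTo x (Icc a b) s → MapsTo (V x) (Icc a b) s)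
    {w : ℝ → ℝ} {q W : ℝ} (hq0 : 0 ≤ q) (hq1 : q < 1)
    (hw1 : ∀ t ∈ Icc a b, 1 ≤ w t) (hwW : ∀ t ∈ Icc a b, w t ≤ W)
    (hV : ∀ x y, ContinuousOn x (Icc a b) → MapsTo x (Icc a b) s →
      ContinuousOn y (Icc a b) → MapsTo y (Icc a b) s →
      ∀ D, (∀ t ∈ Icc a b, dist (x t) (y t) ≤ D * w t) →
        ∀ t ∈ Icc a b, dist (V x t) (V y t) ≤ q * D * w t) :
    ∃ x, ContinuousOn x (Icc a b) ∧ MapsTo x (Icc a b) s ∧ EqOn x (V x) (Icc a b) := by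
  have := hs.completeSpace_coe
  have := hne.to_subtype
  let ext (u : C(Icc a b, s)) : ℝ → Y := IccExtend hab fun t => (u t : Y)
  have hext (u : C(Icc a b, s)) {t : ℝ} (ht : t ∈ Icc a b) : ext u t = u ⟨t, ht⟩ :=
    IccExtend_of_mem hab _ ht
  have hextc (u : C(Icc a b, s)) : ContinuousOn (ext u) (Icc a b) :=
    (continuous_subtype_val.comp u.continuous).Icc_extend'.continuousOn
  have hexts (u : C(Icc a b, s)) : MapsTo (ext u) (Icc a b) s := fun t ht =>
    hext u ht ▸ (u ⟨t, ht⟩).2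
  let Φ (u : C(Icc a b, s)) : C(Icc a b, s) :=
    ⟨(hVs _ (hextc u) (hexts u)).restrict, (hVc _ (hextc u) (hexts u)).mapsToRestrict _⟩
  obtain ⟨u, hu⟩ : ∃ u, Function.IsFixedPt Φ u := by
    refine exists_isFixedPt_of_weighted_contraction (w := fun t => w t) hq0 hq1
      (fun t => hw1 t t.2) (fun t => hwW t t.2) fun u v D huv t => ?_
    refine hV _ _ (hextc u) (hexts u) (hextc v) (hexts v) D (fun r hr => ?_) t t.2
    rw [hext u hr, hext v hr]
    exact huv ⟨r, hr⟩
  refine ⟨ext u, hextc u, hexts u, fun t ht => ?_⟩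
  calc ext u t = u ⟨t, ht⟩ := hext u ht
    _ = Φ u ⟨t, ht⟩ := by rw [hu]
    _ = V (ext u) t := rfl

end FixedPoint

section FractionalVolterra

variable {E : Type*} [NormedAddCommGroup E] [NormedSpace ℝ E]
  {α b c k l t L M β : ℝ} {f : ℝ → E → E} {x₀ : E} {x y : ℝ → E}

/-- The right-hand side of the fractional Volterra equation `x = x₀ + c f(·, x) + k I^α f(·, x)`.
The ABC integral equation is the case `c = (1 - α) / B(α)`, `k = α / B(α)`. -/
noncomputable def fractionalVolterra (α c k : ℝ) (f : ℝ → E → E) (x₀ : E) (x : ℝ → E) (t : ℝ) : E :=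
  x₀ + c • f t (x t) + k • riemannLiouville α (fun s => f s (x s)) t

lemma continuousOn_fractionalVolterra (hα : 0 < α)
    (hfx : ContinuousOn (fun s => f s (x s)) (Icc 0 β)) :
    ContinuousOn (fractionalVolterra α c k f x₀ x) (Icc 0 β) :=
  (continuousOn_const.add (hfx.const_smul c)).add
    ((continuousOn_riemannLiouville hα hfx).const_smul k)

lemma norm_fractionalVolterra_sub_le (hα : 0 < α) (hc : 0 ≤ c) (hk : 0 ≤ k) (ht : 0 ≤ t)
    (hfx : ∀ s ∈ Icc 0 t, ‖f s (x s)‖ ≤ M) :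
    ‖fractionalVolterra α c k f x₀ x t - x₀‖ ≤
      c * M + k * (M * (t ^ α / Real.Gamma (α + 1))) := by
  rw [fractionalVolterra, add_assoc, add_sub_cancel_left]
  refine (norm_add_le _ _).trans ?_
  rw [norm_smul, norm_smul, Real.norm_of_nonneg hc, Real.norm_of_nonneg hk]
  gcongr
  · exact hfx t (right_mem_Icc.2 ht)
  · exact norm_riemannLiouville_le_of_norm_le_const hα ht hfx

lemma norm_fractionalVolterra_sub_fractionalVolterra_le (hα : 0 < α) (hc : 0 ≤ c) (hk : 0 ≤ k)
    (hl : 0 < l) (ht : 0 ≤ t) {K : ℝ} (hfx : ContinuousOn (fun s => f s (x s)) (Icc 0 t))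
    (hfy : ContinuousOn (fun s => f s (y s)) (Icc 0 t))
    (hxy : ∀ s ∈ Icc 0 t, ‖f s (x s) - f s (y s)‖ ≤ K * Real.exp (l * s)) :
    ‖fractionalVolterra α c k f x₀ x t - fractionalVolterra α c k f x₀ y t‖ ≤
      (c + k * l ^ (-α)) * K * Real.exp (l * t) := by
  have hdiff : fractionalVolterra α c k f x₀ x t - fractionalVolterra α c k f x₀ y t =
      c • (f t (x t) - f t (y t)) +
        k • riemannLiouville α (fun s => f s (x s) - f s (y s)) t := by
    rw [riemannLiouville_sub hα (by rwa [uIcc_of_le ht]) (by rwa [uIcc_of_le ht])]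
    simp only [fractionalVolterra, smul_sub]
    abel
  calc ‖fractionalVolterra α c k f x₀ x t - fractionalVolterra α c k f x₀ y t‖
      ≤ c * ‖f t (x t) - f t (y t)‖ +
          k * ‖riemannLiouville α (fun s => f s (x s) - f s (y s)) t‖ := by
        rw [hdiff, ← norm_smul_of_nonneg hc, ← norm_smul_of_nonneg hk]
        exact norm_add_le _ _
    _ ≤ c * (K * Real.exp (l * t)) + k * (K * (l ^ (-α) * Real.exp (l * t))) := by
        gcongr
        · exact hxy t (right_mem_Icc.2 ht)
        · exact norm_riemannLiouville_le_of_norm_le_exp hα ht hl hxy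
    _ = (c + k * l ^ (-α)) * K * Real.exp (l * t) := by ring

lemma exists_pos_add_mul_rpow_neg_mul_lt_one (hα : 0 < α) (k : ℝ) (hcL : c * L < 1) :
    ∃ l : ℝ, 0 < l ∧ (c + k * l ^ (-α)) * L < 1 := by
  have hlim : Tendsto (fun l : ℝ => (c + k * l ^ (-α)) * L) atTop (𝓝 ((c + k * 0) * L)) :=
    (((tendsto_rpow_neg_atTop hα).const_mul k).const_add c).mul_const L
  rw [mul_zero, add_zero] at hlim
  exact ((eventually_gt_atTop 0).and (hlim.eventually_lt_const hcL)).exists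

lemma exists_eqOn_fractionalVolterra [CompleteSpace E] (hα : 0 < α) (hc : 0 ≤ c) (hk : 0 ≤ k)
    (hb : 0 ≤ b) (hβ : 0 ≤ β) (hL : 0 ≤ L)
    (hf : ContinuousOn (fun p : ℝ × E => f p.1 p.2) (Icc 0 β ×ˢ closedBall x₀ b))
    (hM : ∀ t ∈ Icc 0 β, ∀ x ∈ closedBall x₀ b, ‖f t x‖ ≤ M)
    (hLip : ∀ t ∈ Icc 0 β, ∀ x ∈ closedBall x₀ b, ∀ y ∈ closedBall x₀ b,
      ‖f t x - f t y‖ ≤ L * ‖x - y‖)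
    (hcL : c * L < 1) (hMb : c * M + k * (M * (β ^ α / Real.Gamma (α + 1))) ≤ b) :
    ∃ x : ℝ → E, ContinuousOn x (Icc 0 β) ∧ MapsTo x (Icc 0 β) (closedBall x₀ b) ∧
      EqOn x (fractionalVolterra α c k f x₀ x) (Icc 0 β) := by
  have hM0 : 0 ≤ M :=
    (norm_nonneg _).trans (hM 0 (left_mem_Icc.2 hβ) x₀ (mem_closedBall_self hb))
  have hsub {t : ℝ} (ht : t ∈ Icc 0 β) : Icc 0 t ⊆ Icc 0 β := Icc_subset_Icc_right ht.2
  have hfx {x : ℝ → E} (hx : ContinuousOn x (Icc 0 β))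
      (hxb : MapsTo x (Icc 0 β) (closedBall x₀ b)) :
      ContinuousOn (fun s => f s (x s)) (Icc 0 β) :=
    hf.comp (continuousOn_id.prodMk hx) fun s hs => ⟨hs, hxb hs⟩
  obtain ⟨l, hl, hq⟩ := exists_pos_add_mul_rpow_neg_mul_lt_one hα k hcL
  refine exists_continuousOn_eqOn_of_weighted_contraction hβ isClosed_closedBall.isComplete
    (nonempty_closedBall.2 hb) (w := fun t => Real.exp (l * t)) (W := Real.exp (l * β))
    (fun x hx hxb => continuousOn_fractionalVolterra hα (hfx hx hxb)) (fun x _ hxb t ht => ?_)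
    (by positivity) hq (fun t ht => Real.one_le_exp (mul_nonneg hl.le ht.1)) (fun t ht => ?_)
    fun x y hx hxb hy hyb D hD t ht => ?_
  · rw [mem_closedBall_iff_norm]
    calc ‖fractionalVolterra α c k f x₀ x t - x₀‖
        ≤ c * M + k * (M * (t ^ α / Real.Gamma (α + 1))) :=
          norm_fractionalVolterra_sub_le hα hc hk ht.1 fun s hs =>
            hM s (hsub ht hs) _ (hxb (hsub ht hs))
      _ ≤ c * M + k * (M * (β ^ α / Real.Gamma (α + 1))) := by
          gcongr
          exacts [ht.1, ht.2]
      _ ≤ b := hMb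
  · have := ht.2
    gcongr
  · rw [dist_eq_norm, mul_assoc (c + k * l ^ (-α))]
    refine norm_fractionalVolterra_sub_fractionalVolterra_le hα hc hk hl ht.1
      ((hfx hx hxb).mono (hsub ht)) ((hfx hy hyb).mono (hsub ht)) fun s hs => ?_
    calc ‖f s (x s) - f s (y s)‖
        ≤ L * ‖x s - y s‖ := hLip s (hsub ht hs) _ (hxb (hsub ht hs)) _ (hyb (hsub ht hs))
      _ ≤ L * (D * Real.exp (l * s)) := by
          gcongr
          rw [← dist_eq_norm]
          exact hD s (hsub ht hs)
      _ = L * D * Real.exp (l * s) := by ring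

lemma eq_of_eq_add_smul_of_map_eq_zero {φ : E → E} {y : E} (hc : 0 ≤ c) (hcL : c * L < 1)
    (hφ : ‖φ y - φ x₀‖ ≤ L * ‖y - x₀‖) (hφ0 : φ x₀ = 0) (hy : y = x₀ + c • φ y) : y = x₀ := by
  have hle : ‖y - x₀‖ ≤ c * L * ‖y - x₀‖ :=
    calc ‖y - x₀‖ = c * ‖φ y - φ x₀‖ := by
          rw [hφ0, sub_zero, ← norm_smul_of_nonneg hc, eq_sub_of_add_eq' hy.symm]
      _ ≤ c * (L * ‖y - x₀‖) := by gcongr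
      _ = c * L * ‖y - x₀‖ := (mul_assoc _ _ _).symm
  have hzero : ‖y - x₀‖ = 0 := by nlinarith [norm_nonneg (y - x₀)]
  exact sub_eq_zero.1 (norm_eq_zero.1 hzero)

end FractionalVolterra

lemma mul_min_rpow_one_div_rpow_le {T A M α : ℝ} (hα : 0 < α) (hT : 0 ≤ T) (hA : 0 ≤ A)
    (hM : 0 ≤ M) : M * (min T ((A / M) ^ (1 / α))) ^ α ≤ A := by
  rcases hM.eq_or_lt with rfl | hM_pos
  · rwa [zero_mul]
  calc M * (min T ((A / M) ^ (1 / α))) ^ α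
      ≤ M * ((A / M) ^ (1 / α)) ^ α := by
        gcongr
        exact min_le_right _ _
    _ = M * (A / M) := by rw [one_div, Real.rpow_inv_rpow (div_nonneg hA hM) hα.ne']
    _ = A := mul_div_cancel₀ A hM_pos.ne'

theorem abc_local_existence_general {E : Type*} [NormedAddCommGroup E] [NormedSpace ℝ E]
    [CompleteSpace E] {T α B M L b β : ℝ} {ω₀ : E} (hT : 0 ≤ T) (hα : 0 < α) (hα1 : α < 1)
    (hB : 0 < B) (hb : 0 ≤ b) {f : ℝ → E → E}
    (hf : ContinuousOn (fun p : ℝ × E => f p.1 p.2) (Icc 0 T ×ˢ closedBall ω₀ b))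
    (hM : ∀ τ ∈ Icc 0 T, ∀ x ∈ closedBall ω₀ b, ‖f τ x‖ ≤ M) (hL : 0 ≤ L) (hLB : L < B / (1 - α))
    (hLip : ∀ τ ∈ Icc 0 T, ∀ x ∈ closedBall ω₀ b, ∀ y ∈ closedBall ω₀ b,
      ‖f τ x - f τ y‖ ≤ L * ‖x - y‖)
    (hf0 : f 0 ω₀ = 0) (hsmall : M * (1 - α) ≤ b * B)
    (hβ : β = min T ((Real.Gamma α * (b * B - M * (1 - α)) / M) ^ (1 / α))) :
    ∃ ω : ℝ → E, ContinuousOn ω (Icc 0 β) ∧ ω 0 = ω₀ ∧ MapsTo ω (Icc 0 β) (closedBall ω₀ b) ∧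
      ∀ τ ∈ Icc 0 β,
        ω τ = ω₀ + ((1 - α) / B) • f τ (ω τ) +
          (α / (B * Real.Gamma α)) • ∫ σ in (0 : ℝ)..τ, (τ - σ) ^ (α - 1) • f σ (ω σ) := by
  have hα' : 0 < 1 - α := sub_pos.2 hα1
  have hΓ : 0 < Real.Gamma α := Real.Gamma_pos_of_pos hα
  have hω₀ : ω₀ ∈ closedBall ω₀ b := mem_closedBall_self hb
  have hM0 : 0 ≤ M := (norm_nonneg _).trans (hM 0 (left_mem_Icc.2 hT) ω₀ hω₀)
  have hA : 0 ≤ Real.Gamma α * (b * B - M * (1 - α)) := mul_nonneg hΓ.le (sub_nonneg.2 hsmall)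
  have hβ0 : 0 ≤ β := hβ ▸ le_min hT (Real.rpow_nonneg (div_nonneg hA hM0) _)
  have hsub : Icc 0 β ⊆ Icc 0 T := Icc_subset_Icc_right (hβ ▸ min_le_left _ _)
  have hcL : (1 - α) / B * L < 1 := by
    rwa [div_mul_eq_mul_div, div_lt_one hB, mul_comm, ← lt_div_iff₀ hα']
  have hMb : (1 - α) / B * M + α / B * (M * (β ^ α / Real.Gamma (α + 1))) ≤ b := by
    have hMβ := hβ ▸ mul_min_rpow_one_div_rpow_le hα hT hA hM0
    calc (1 - α) / B * M + α / B * (M * (β ^ α / Real.Gamma (α + 1)))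
        = (1 - α) / B * M + M * β ^ α / (B * Real.Gamma α) := by
          rw [Real.Gamma_add_one hα.ne']
          field_simp
      _ ≤ (1 - α) / B * M + Real.Gamma α * (b * B - M * (1 - α)) / (B * Real.Gamma α) := by gcongr
      _ = b := by field_simp; ring
  obtain ⟨ω, hωc, hωb, hω⟩ := exists_eqOn_fractionalVolterra hα (by positivity) (by positivity)
    hb hβ0 hL (hf.mono (prod_mono_left hsub)) (fun τ hτ => hM τ (hsub hτ))
    (fun τ hτ => hLip τ (hsub hτ)) hcL hMb
  refine ⟨ω, hωc, ?_, hωb, fun τ hτ => ?_⟩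
  · have hmem : (0 : ℝ) ∈ Icc 0 β := left_mem_Icc.2 hβ0
    refine eq_of_eq_add_smul_of_map_eq_zero (by positivity) hcL
      (hLip 0 (hsub hmem) _ (hωb hmem) _ hω₀) hf0 ?_
    simpa [fractionalVolterra] using hω hmem
  · simpa only [fractionalVolterra, riemannLiouville, smul_smul, ← div_eq_mul_inv, div_div]
      using hω hτ

theorem abc_local_existence
    (T α B M L₁ L₂ ω₀ b β : ℝ)
    (hT : 0 < T) (hα : 0 < α) (hα1 : α < 1) (hB : 0 < B) (hb : 0 < b)
    (f : ℝ → ℝ → ℝ)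
    (hf : ContinuousOn (fun p : ℝ × ℝ => f p.1 p.2) (Set.Icc (0:ℝ) T ×ˢ Set.univ))
    (hM : ∀ τ ∈ Set.Icc (0:ℝ) T, ∀ x : ℝ, |x - ω₀| ≤ b → |f τ x| ≤ M)
    (hL₁ : 0 < L₁) (hL₂ : 0 < L₂) (hL₂' : L₂ < B / (1 - α))
    (hLip : ∀ τ₁ ∈ Set.Icc (0:ℝ) T, ∀ τ₂ ∈ Set.Icc (0:ℝ) T, ∀ x y : ℝ,
      |f τ₁ x - f τ₂ y| ≤ L₁ * |τ₁ - τ₂| + L₂ * |x - y|)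
    (hf0 : f 0 ω₀ = 0)
    (hsmall : M * (1 - α) < b * B)
    (hβ : β = min T ((Real.Gamma α * (b * B - M * (1 - α)) / M) ^ (1 / α))) :
    ∃ ω : ℝ → ℝ, ContinuousOn ω (Set.Icc (0:ℝ) β) ∧ ω 0 = ω₀ ∧
      (∀ τ ∈ Set.Icc (0:ℝ) β, |ω τ - ω₀| ≤ b) ∧
      ∀ τ ∈ Set.Icc (0:ℝ) β,
        ω τ = ω₀ + (1 - α) / B * f τ (ω τ) +
          α / (B * Real.Gamma α) *
            ∫ σ in (0:ℝ)..τ, (τ - σ) ^ (α - 1) * f σ (ω σ) := by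
  simpa only [MapsTo, mem_closedBall_iff_norm, Real.norm_eq_abs, smul_eq_mul] using
    abc_local_existence_general hT.le hα hα1 hB hb.le (hf.mono (prod_mono_right (subset_univ _)))
      (by simpa [← Real.dist_eq] using hM) hL₂.le hL₂'
      (fun τ hτ x _ y _ => by simpa using hLip τ hτ τ hτ x y) hf0 hsmall.le hβ
end
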